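/- Assume hypothesis (H) holds, let m > 1 be an integer, let ψ_m(t) = m·t^m for t ∈ [0,∞), and let h0 ∈ L^{ψ_m,1}(Ω, K). If there exists α ∈ [0, 1/2) such that |g_n(x)| ≤ α · min{|J_{f_n}(x)|/(K·L), 1/N} for all n ∈ {1,…,N} and almost all x ∈ Ω, then the series Σ_{n=0}^{∞} Pⁿh0 converges in L^{ψ_m,1}(Ω, K) to the unique solution φ ∈ L^{ψ_m,1}(Ω, K) of φ = Pφ + h0, and ‖Σ_{k=m}^{∞} P^k h0‖_{L^{ψ_m,1}(Ω,K)} ≤ (2α)^m (1 − 2α)^{-1} ‖h0‖_{L^{ψ_m,1}(Ω,K)}. -/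

import Mathlib

open MeasureTheory Filter Topology Set
open scoped ENNReal

/-- A (finite-valued) Young function: non-decreasing, left-continuous and convex on
`[0, ∞)`, with `ψ 0 = 0 = lim_{t→0+} ψ t` and `lim_{t→∞} ψ t = ∞`. -/
def IsYoung (ψ : ℝ → ℝ) : Prop :=
  MonotoneOn ψ (Set.Ici 0) ∧
  ConvexOn ℝ (Set.Ici 0) ψ ∧
  (∀ t : ℝ, 0 < t → Tendsto ψ (𝓝[<] t) (𝓝 (ψ t))) ∧
  ψ 0 = 0 ∧ Tendsto ψ (𝓝[>] 0) (𝓝 0) ∧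
  Tendsto ψ atTop atTop

/-- The Young function `ψ` satisfies condition `Δ₂` globally. -/
def Delta2 (ψ : ℝ → ℝ) : Prop :=
  ∃ d : ℝ, 1 < d ∧ ∀ t : ℝ, 0 < t → ψ (2 * t) ≤ d * ψ t

/-- `x0` is a density point of the set `S` (w.r.t. `k`-dimensional Lebesgue measure). -/
def IsDensityPt {k : ℕ} (S : Set (EuclideanSpace ℝ (Fin k)))
    (x0 : EuclideanSpace ℝ (Fin k)) : Prop :=
  Tendsto (fun r : ℝ =>
      volume (S ∩ Metric.closedBall x0 r) / volume (Metric.closedBall x0 r))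
    (𝓝[>] 0) (𝓝 1)

/-- The linear map `L` is an approximate differential of `F` at `x0 ∈ Ω`. -/
def HasApproxDerivAt {k : ℕ} (Ω : Set (EuclideanSpace ℝ (Fin k)))
    (F : EuclideanSpace ℝ (Fin k) → EuclideanSpace ℝ (Fin k))
    (L : EuclideanSpace ℝ (Fin k) →L[ℝ] EuclideanSpace ℝ (Fin k))
    (x0 : EuclideanSpace ℝ (Fin k)) : Prop :=
  ∀ ε : ℝ, 0 < ε →
    IsDensityPt {x | x ∈ Ω \ {x0} ∧ ‖F x - F x0 - L (x - x0)‖ / ‖x - x0‖ < ε} x0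

/-- The distribution function `μ_f(s) = μ {x ∈ Ω : |f x| > s}` of `f : Ω → 𝕜`. -/
noncomputable def distribFn {k : ℕ} {𝕜 : Type*} [RCLike 𝕜]
    (Ω : Set (EuclideanSpace ℝ (Fin k))) (f : EuclideanSpace ℝ (Fin k) → 𝕜)
    (s : ℝ) : ℝ≥0∞ :=
  volume {x | x ∈ Ω ∧ s < ‖f x‖}

/-- The `[0, ∞]`-valued extension of `σ = τ⁻¹ : [0, ∞) → [0, ∞)`. -/
noncomputable def extInv (σ : ℝ → ℝ) : ℝ≥0∞ → ℝ≥0∞ :=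
  fun a => if a = ∞ then ∞ else ENNReal.ofReal (σ a.toReal)

/-- The Lorentz norm `‖f‖_{L^{ψ,1}(Ω,𝕜)} = ∫₀^∞ τ⁻¹(μ_f(s)) ds`, where `σ = τ⁻¹`. -/
noncomputable def lorentzNorm {k : ℕ} {𝕜 : Type*} [RCLike 𝕜]
    (Ω : Set (EuclideanSpace ℝ (Fin k))) (σ : ℝ → ℝ)
    (f : EuclideanSpace ℝ (Fin k) → 𝕜) : ℝ≥0∞ :=
  ∫⁻ s in Set.Ioi (0 : ℝ), extInv σ (distribFn Ω f s)

/-- Membership in the Lorentz space `L^{ψ,1}(Ω,𝕜)`. -/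
def MemLorentz {k : ℕ} {𝕜 : Type*} [RCLike 𝕜]
    (Ω : Set (EuclideanSpace ℝ (Fin k))) (σ : ℝ → ℝ)
    (f : EuclideanSpace ℝ (Fin k) → 𝕜) : Prop :=
  Measurable f ∧ LocallyIntegrableOn f Ω volume ∧ lorentzNorm Ω σ f < ∞

/-- The linear operator `P φ = ∑ n, g n · (φ ∘ f n)`. -/
noncomputable def Pop {k N : ℕ} {𝕜 : Type*} [RCLike 𝕜]
    (f : Fin N → EuclideanSpace ℝ (Fin k) → EuclideanSpace ℝ (Fin k))
    (g : Fin N → EuclideanSpace ℝ (Fin k) → 𝕜)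
    (φ : EuclideanSpace ℝ (Fin k) → 𝕜) : EuclideanSpace ℝ (Fin k) → 𝕜 :=
  fun x => ∑ n : Fin N, g n x * φ (f n x)

/- The modulus `u ↦ ∑ n, |g n| · (u ∘ f n)` of `P` is bounded by `α` on `L¹(Ω)` and on `L^∞(Ω)`.
On `L^∞` this is `∑ n, |g n| ≤ α`. On `L¹` it follows from the area inequality
`∫ (v ∘ F) |det DF| ≤ ∫ v(y) card (F⁻¹ y) dy`, which holds because `F` is injective
and nearly linear on each of countably many sets that cover the points where it is approximately
differentiable with `det DF ≠ 0`, and from the fact that almost every point has at most `K`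
preimages under each of at most `L` of the maps.

For the power Young function `τ⁻¹` is a multiple of `a ↦ a ^ (1 / m)` with `1 / m < 1`, which is
a mixture of the truncations `a ↦ min a t`. Hence the Lorentz norm is a mixture of the
`K`-functionals of the couple `(L¹, L^∞)`, so that it too is contracted by the factor `α`, and
the equation is solved by the Neumann series. This gives the rate `α ^ M / (1 - α)`. -/

section NearLinear

open Metric Module

variable {E F : Type*} [NormedAddCommGroup E] [NormedSpace ℝ E]
  [NormedAddCommGroup F] [NormedSpace ℝ F]

/-- The points `y` at which `f` deviates from its affine approximation with linear part `A` at `x`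
by more than `ε * ‖y - x‖`. -/
def deviationSet (f : E → F) (A : E →L[ℝ] F) (ε : ℝ) (x : E) : Set E :=
  {y | ε * ‖y - x‖ < ‖f y - f x - A (y - x)‖}

lemma norm_sub_sub_le_of_notMem_deviationSet {f : E → F} {A : E →L[ℝ] F} {ε : ℝ} {x y z : E}
    (hx : z ∉ deviationSet f A ε x) (hy : z ∉ deviationSet f A ε y) :
    ‖f x - f y - A (x - y)‖ ≤ ε * ‖z - x‖ + ε * ‖z - y‖ := by
  rw [deviationSet, mem_ofPred_eq, not_lt] at hx hy
  have hsplit : f x - f y - A (x - y) = (f z - f y - A (z - y)) - (f z - f x - A (z - x)) := by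
    simp only [map_sub]
    abel
  calc ‖f x - f y - A (x - y)‖ ≤ ‖f z - f y - A (z - y)‖ + ‖f z - f x - A (z - x)‖ :=
        hsplit ▸ norm_sub_le _ _
    _ ≤ ε * ‖z - x‖ + ε * ‖z - y‖ := by linarith

lemma closedBall_midpoint_subset {x y : E} {r : ℝ} (h : dist x y ≤ r) :
    closedBall (midpoint ℝ x y) (r / 2) ⊆ closedBall x r ∩ closedBall y r := by
  intro z hz
  rw [mem_closedBall] at hz
  have hx := dist_triangle z (midpoint ℝ x y) x
  have hy := dist_triangle z (midpoint ℝ x y) y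
  rw [dist_midpoint_left, Real.norm_ofNat] at hx
  rw [dist_midpoint_right, Real.norm_ofNat] at hy
  constructor <;> rw [mem_closedBall] <;> linarith

lemma exists_half_pow_near {d : ℝ} (hd : 0 < d) {j : ℕ} (hdj : d ≤ (1 / 2) ^ j) :
    ∃ n ≥ j, d ≤ (1 / 2) ^ n ∧ (1 / 2) ^ n < 2 * d := by
  obtain ⟨n, hlt, hle⟩ := exists_nat_pow_near_of_lt_one hd
    (hdj.trans (pow_le_one₀ (by norm_num) (by norm_num))) (y := 1 / 2) (by norm_num) (by norm_num)
  refine ⟨n, ?_, hle, by rw [pow_succ] at hlt; linarith⟩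
  exact Nat.lt_succ_iff.1
    ((pow_lt_pow_iff_right_of_lt_one₀ (by norm_num) (by norm_num)).1 (hlt.trans_le hdj))

variable [MeasurableSpace E]

/-- The points `x` such that, in every ball of radius `2⁻ⁿ` with `n ≥ j` about `x`, the map `f`
deviates by more than `ε` from the linear map `A` only on a small proportion of the ball. The
proportion is chosen so that the exceptional sets about two points `x` and `y` with
`‖x - y‖ ≤ 2⁻ⁿ` cannot fill the ball of half the radius about their midpoint. -/
def nearLinearSet (μ : Measure E) (f : E → F) (A : E →L[ℝ] F) (ε : ℝ) (j : ℕ) : Set E :=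
  {x | ∀ n ≥ j, μ (closedBall x ((1 / 2) ^ n) ∩ deviationSet f A ε x) ≤
    ENNReal.ofReal (1 / 4 * (1 / 2) ^ finrank ℝ E) * μ (closedBall x ((1 / 2) ^ n))}

variable [BorelSpace E] [FiniteDimensional ℝ E] {μ : Measure E} [μ.IsAddHaarMeasure]

lemma measurableSet_deviationSet_prod [MeasurableSpace F] [BorelSpace F]
    [SecondCountableTopology F] {f : E → F} (hf : Measurable f) (A : E →L[ℝ] F) (ε : ℝ) :
    MeasurableSet {p : E × E | p.2 ∈ deviationSet f A ε p.1} :=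
  measurableSet_lt (f := fun p : E × E => ε * ‖p.2 - p.1‖)
    (g := fun p => ‖f p.2 - f p.1 - A (p.2 - p.1)‖) (by fun_prop) (by fun_prop)

lemma measurableSet_nearLinearSet [MeasurableSpace F] [BorelSpace F] [SecondCountableTopology F]
    {f : E → F} (hf : Measurable f) (A : E →L[ℝ] F) (ε : ℝ) (j : ℕ) :
    MeasurableSet (nearLinearSet μ f A ε j) := by
  simp only [nearLinearSet, ofPred_forall]
  refine MeasurableSet.iInter fun n => MeasurableSet.iInter fun _ => ?_
  have hball : MeasurableSet {p : E × E | dist p.2 p.1 ≤ (1 / 2) ^ n} :=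
    measurableSet_le (by fun_prop) (by fun_prop)
  refine measurableSet_le (measurable_measure_prodMk_left
    (hball.inter (measurableSet_deviationSet_prod hf A ε))) ?_
  simp_rw [μ.addHaar_closedBall_center]
  exact measurable_const

lemma exists_mem_closedBall_half_notMem_union {x y : E} {s t : Set E} {r : ℝ} (hr : 0 < r)
    (hs : μ s ≤ ENNReal.ofReal (1 / 4 * (1 / 2) ^ finrank ℝ E) * μ (closedBall x r))
    (ht : μ t ≤ ENNReal.ofReal (1 / 4 * (1 / 2) ^ finrank ℝ E) * μ (closedBall y r)) (z : E) :
    ∃ w ∈ closedBall z (r / 2), w ∉ s ∧ w ∉ t := by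
  set d := finrank ℝ E
  set V := μ (closedBall 0 r)
  have hV0 : V ≠ 0 := (measure_closedBall_pos μ 0 hr).ne'
  have hVtop : V ≠ ∞ := measure_closedBall_lt_top.ne
  have hhalf : μ (closedBall z (r / 2)) = ENNReal.ofReal ((1 / 2) ^ d) * V := by
    rw [div_eq_inv_mul, ← one_div, μ.addHaar_closedBall_mul z (by norm_num) hr.le]
  have hlt : μ (s ∪ t) < μ (closedBall z (r / 2)) := by
    rw [μ.addHaar_closedBall_center] at hs ht
    calc μ (s ∪ t) ≤ μ s + μ t := measure_union_le s t
      _ ≤ ENNReal.ofReal (1 / 4 * (1 / 2) ^ d) * V + ENNReal.ofReal (1 / 4 * (1 / 2) ^ d) * V :=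
        add_le_add hs ht
      _ = ENNReal.ofReal (1 / 2 * (1 / 2) ^ d) * V := by
        rw [← add_mul, ← ENNReal.ofReal_add (by positivity) (by positivity)]
        ring_nf
      _ < ENNReal.ofReal ((1 / 2) ^ d) * V := by
        refine ENNReal.mul_lt_mul_left hV0 hVtop
          ((ENNReal.ofReal_lt_ofReal_iff (by positivity)).2 ?_)
        linarith [pow_pos (one_half_pos (α := ℝ)) d]
      _ = μ (closedBall z (r / 2)) := hhalf.symm
  by_contra! hcover
  exact hlt.not_ge (measure_mono fun w hw => or_iff_not_imp_left.2 (hcover w hw))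

lemma approximatesLinearOn_of_subset_nearLinearSet {f : E → F} {A : E →L[ℝ] F} {ε : NNReal}
    {j : ℕ} {s : Set E} (hs : s ⊆ nearLinearSet μ f A ε j)
    (hdist : ∀ x ∈ s, ∀ y ∈ s, dist x y ≤ (1 / 2) ^ j) :
    ApproximatesLinearOn f A s (4 * ε) := by
  intro x hx y hy
  rcases eq_or_ne x y with rfl | hxy
  · simp
  obtain ⟨n, hjn, hle, hlt⟩ := exists_half_pow_near (dist_pos.2 hxy) (hdist x hx y hy)
  obtain ⟨z, hz, hzx, hzy⟩ := exists_mem_closedBall_half_notMem_union (by positivity)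
    (hs hx n hjn) (hs hy n hjn) (midpoint ℝ x y)
  obtain ⟨hzx', hzy'⟩ := closedBall_midpoint_subset hle hz
  calc ‖f x - f y - A (x - y)‖ ≤ ε * ‖z - x‖ + ε * ‖z - y‖ :=
        norm_sub_sub_le_of_notMem_deviationSet (fun h => hzx ⟨hzx', h⟩) fun h => hzy ⟨hzy', h⟩
    _ ≤ ε * (2 * dist x y) + ε * (2 * dist x y) := by
        rw [← dist_eq_norm z x, ← dist_eq_norm z y]
        gcongr
        exacts [(mem_closedBall.1 hzx').trans hlt.le, (mem_closedBall.1 hzy').trans hlt.le]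
    _ = ↑(4 * ε) * ‖x - y‖ := by
        rw [dist_eq_norm]
        push_cast
        ring

end NearLinear

section ApproxDerivative

open Metric Module

variable {k : ℕ}

lemma IsDensityPt.eventually_measure_closedBall_inter_le {S : Set (EuclideanSpace ℝ (Fin k))}
    {x : EuclideanSpace ℝ (Fin k)} (hS : IsDensityPt S x) {c : ℝ≥0∞} (hc : c ≠ 0) :
    ∀ᶠ r in 𝓝[>] (0 : ℝ), ∀ B, MeasurableSet B → Disjoint S B →
      volume (closedBall x r ∩ B) ≤ c * volume (closedBall x r) := by
  have hlt : (1 : ℝ≥0∞) - c < 1 := ENNReal.sub_lt_self (by simp) (by simp) hc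
  filter_upwards [hS.eventually (lt_mem_nhds hlt), self_mem_nhdsWithin] with r hdens hr B hB hSB
  set V := volume (closedBall x r)
  have hVtop : V ≠ ∞ := measure_closedBall_lt_top.ne
  have hdiff : (1 - c) * V ≤ volume (closedBall x r \ B) := by
    rw [ENNReal.lt_div_iff_mul_lt (Or.inl (measure_closedBall_pos _ _ hr).ne') (Or.inl hVtop)]
      at hdens
    exact hdens.le.trans (measure_mono fun y hy => ⟨hy.2, hSB.notMem_of_mem_left hy.1⟩)
  refine (ENNReal.add_le_add_iff_right (ENNReal.mul_ne_top (hlt.trans ENNReal.one_lt_top).ne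
    hVtop)).1 ?_
  calc volume (closedBall x r ∩ B) + (1 - c) * V
      ≤ volume (closedBall x r ∩ B) + volume (closedBall x r \ B) := by gcongr
    _ = V := measure_inter_add_sdiff _ hB
    _ ≤ c * V + (1 - c) * V := by
        rw [← add_mul]
        exact le_mul_of_one_le_left' le_add_tsub

lemma exists_mem_nearLinearSet {Ω : Set (EuclideanSpace ℝ (Fin k))}
    {f : EuclideanSpace ℝ (Fin k) → EuclideanSpace ℝ (Fin k)} (hf : Measurable f)
    {A L : EuclideanSpace ℝ (Fin k) →L[ℝ] EuclideanSpace ℝ (Fin k)} {ε : ℝ} (hε : 0 < ε)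
    (hLA : ‖L - A‖ ≤ ε / 2) {x : EuclideanSpace ℝ (Fin k)} (hL : HasApproxDerivAt Ω f L x) :
    ∃ j, x ∈ nearLinearSet volume f A ε j := by
  have hdisj : Disjoint {y | y ∈ Ω \ {x} ∧ ‖f y - f x - L (y - x)‖ / ‖y - x‖ < ε / 2}
      (deviationSet f A ε x) := by
    refine disjoint_left.2 fun y hy => notMem_ofPred_iff.2 (not_lt.2 ?_)
    have hyL := (div_lt_iff₀ (norm_pos_iff.2 (sub_ne_zero.2 hy.1.2))).1 hy.2
    calc ‖f y - f x - A (y - x)‖ = ‖(f y - f x - L (y - x)) + (L - A) (y - x)‖ := by simp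
      _ ≤ ‖f y - f x - L (y - x)‖ + ‖(L - A) (y - x)‖ := norm_add_le _ _
      _ ≤ ε / 2 * ‖y - x‖ + ε / 2 * ‖y - x‖ :=
        add_le_add hyL.le ((L - A).le_of_opNorm_le hLA _)
      _ = ε * ‖y - x‖ := by ring
  have hdev : MeasurableSet (deviationSet f A ε x) :=
    measurable_prodMk_left (measurableSet_deviationSet_prod hf A ε)
  have hpow : Tendsto (fun n : ℕ => ((1 : ℝ) / 2) ^ n) atTop (𝓝[>] 0) :=
    tendsto_pow_atTop_nhdsWithin_zero_of_lt_one (by norm_num) (by norm_num)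
  have hball := hpow.eventually ((hL (ε / 2) (half_pos hε)).eventually_measure_closedBall_inter_le
    (c := ENNReal.ofReal (1 / 4 * (1 / 2) ^ finrank ℝ (EuclideanSpace ℝ (Fin k))))
    (ENNReal.ofReal_pos.2 (by positivity)).ne')
  obtain ⟨j, hj⟩ := eventually_atTop.1 hball
  exact ⟨j, fun n hn => hj n hn _ hdev hdisj⟩

end ApproxDerivative

/-- The map `f` is injective on `s` and, up to the factor `c`, increases volume on `s` at least by
the density `h`, i.e. `h` is a lower bound for the Jacobian of `f` on `s`. -/
structure ExpandsOn {X : Type*} [MeasurableSpace X] (μ : Measure X) (f : X → X) (h : X → ℝ≥0∞)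
    (c : ℝ≥0∞) (s : Set X) : Prop where
  injOn : InjOn f s
  setLIntegral_le : ∀ D ⊆ s, ∫⁻ x in D, h x ∂μ ≤ c * μ (f '' D)

lemma ExpandsOn.mono {X : Type*} [MeasurableSpace X] {μ : Measure X} {f : X → X} {h : X → ℝ≥0∞}
    {c : ℝ≥0∞} {s t : Set X} (ht : ExpandsOn μ f h c t) (hst : s ⊆ t) : ExpandsOn μ f h c s :=
  ⟨ht.injOn.mono hst, fun D hD => ht.setLIntegral_le D (hD.trans hst)⟩

section Determinant

lemma eventually_injOn_of_approximatesLinearOn {E F : Type*}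
    [NormedAddCommGroup E] [NormedSpace ℝ E] [NormedAddCommGroup F] [NormedSpace ℝ F]
    (A : E ≃L[ℝ] F) : ∀ᶠ δ : NNReal in 𝓝 0, ∀ (f : E → F) (s : Set E),
      ApproximatesLinearOn f (A : E →L[ℝ] F) s δ → InjOn f s := by
  rcases subsingleton_or_nontrivial E with hE | hE
  · exact Eventually.of_forall fun δ f s hf => hf.injOn (Or.inl hE)
  · filter_upwards [gt_mem_nhds (inv_pos.2 A.nnnorm_symm_pos)] with δ hδ f s hf
    exact hf.injOn (Or.inr hδ)

variable {E : Type*} [NormedAddCommGroup E] [NormedSpace ℝ E]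

lemma eventually_abs_det_le_mul {A : E →L[ℝ] E} (hA : A.det ≠ 0) {c : NNReal} (hc : 1 < c) :
    ∀ᶠ B in 𝓝 A, ENNReal.ofReal |B.det| ≤ c * ENNReal.ofReal |A.det| := by
  have hcont : Tendsto (fun B : E →L[ℝ] E => ENNReal.ofReal |B.det|) (𝓝 A)
      (𝓝 (ENNReal.ofReal |A.det|)) :=
    (ENNReal.continuous_ofReal.comp ContinuousLinearMap.continuous_det.abs).tendsto A
  have hlt : ENNReal.ofReal |A.det| < c * ENNReal.ofReal |A.det| := by
    simpa using ENNReal.mul_lt_mul_left (ENNReal.ofReal_pos.2 (abs_pos.2 hA)).ne'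
      ENNReal.ofReal_ne_top (ENNReal.one_lt_coe_iff.2 hc)
  exact (hcont.eventually (gt_mem_nhds hlt)).mono fun _ => le_of_lt

variable [FiniteDimensional ℝ E] [MeasurableSpace E] [BorelSpace E] (μ : Measure E)
  [μ.IsAddHaarMeasure]

lemma eventually_abs_det_mul_le_addHaar_image {A : E →L[ℝ] E} (hA : A.det ≠ 0) {c : NNReal}
    (hc : 1 < c) : ∀ᶠ δ : NNReal in 𝓝[>] 0, ∀ (s : Set E) (f : E → E),
      ApproximatesLinearOn f A s δ → ENNReal.ofReal |A.det| * μ s ≤ c * μ (f '' s) := by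
  have hc0 : c ≠ 0 := (one_pos.trans hc).ne'
  have hlt : (Real.toNNReal |A.det| / c : NNReal) < ENNReal.ofReal |A.det| :=
    ENNReal.coe_lt_coe.2 (div_lt_self (Real.toNNReal_pos.2 (abs_pos.2 hA)) hc)
  filter_upwards [mul_le_addHaar_image_of_lt_det μ A hlt] with δ hδ s f hf
  calc ENNReal.ofReal |A.det| * μ s
      = c * ((Real.toNNReal |A.det| / c : NNReal) * μ s) := by
        rw [← mul_assoc, ← ENNReal.coe_mul, mul_div_cancel₀ _ hc0, ENNReal.ofReal]
    _ ≤ c * μ (f '' s) := by gcongr; exact hδ s f hf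

lemma eventually_expandsOn_of_approximatesLinearOn {A : E →L[ℝ] E} (hA : A.det ≠ 0)
    {c : NNReal} (hc : 1 < c) :
    ∀ᶠ δ : NNReal in 𝓝[>] 0, ∀ (s : Set E) (f : E → E), ApproximatesLinearOn f A s δ →
      ∀ h : E → ℝ≥0∞, (∀ x ∈ s, h x ≤ c * ENNReal.ofReal |A.det|) →
        ExpandsOn μ f h (c ^ 2) s := by
  filter_upwards [eventually_abs_det_mul_le_addHaar_image μ hA hc, nhdsWithin_le_nhds
    (eventually_injOn_of_approximatesLinearOn (A.toContinuousLinearEquivOfDetNeZero hA))]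
    with δ hvol hinj s f hf h hh
  refine ⟨hinj f s (by simpa using hf), fun D hD => ?_⟩
  calc ∫⁻ x in D, h x ∂μ ≤ ∫⁻ _ in D, c * ENNReal.ofReal |A.det| ∂μ :=
        setLIntegral_mono measurable_const fun x hx => hh x (hD hx)
    _ = c * (ENNReal.ofReal |A.det| * μ D) := by rw [setLIntegral_const, mul_assoc]
    _ ≤ c * (c * μ (f '' D)) := mul_right_mono (hvol D f (hf.mono_set hD))
    _ = c ^ 2 * μ (f '' D) := by rw [pow_two, mul_assoc]

lemma exists_nhds_expandsOn {A : E →L[ℝ] E} (hA : A.det ≠ 0) {c : NNReal} (hc : 1 < c) :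
    ∃ ε : NNReal, 0 < ε ∧ ∃ U ∈ 𝓝 A, (∀ B ∈ U, ‖B - A‖ ≤ ε / 2 ∧
        ENNReal.ofReal |B.det| ≤ c * ENNReal.ofReal |A.det|) ∧
      ∀ (s : Set E) (f : E → E), ApproximatesLinearOn f A s (4 * ε) →
        ∀ h : E → ℝ≥0∞, (∀ x ∈ s, h x ≤ c * ENNReal.ofReal |A.det|) →
          ExpandsOn μ f h (c ^ 2) s := by
  obtain ⟨δ, hδ, hδ0⟩ :=
    ((eventually_expandsOn_of_approximatesLinearOn μ hA hc).and self_mem_nhdsWithin).exists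
  have hε : 0 < δ / 4 := div_pos hδ0 (by norm_num)
  refine ⟨δ / 4, hε, _, inter_mem (Metric.closedBall_mem_nhds A (half_pos (NNReal.coe_pos.2 hε)))
    (eventually_abs_det_le_mul hA hc), fun B hB => ⟨?_, hB.2⟩, ?_⟩
  · rw [← dist_eq_norm]
    exact hB.1
  · rwa [mul_div_cancel₀ _ (by norm_num)]

end Determinant

section Cover

variable {k : ℕ}

lemma exists_seq_cover_expandsOn {Ω : Set (EuclideanSpace ℝ (Fin k))} (hΩ : MeasurableSet Ω)
    {f : EuclideanSpace ℝ (Fin k) → EuclideanSpace ℝ (Fin k)} (hf : Measurable f)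
    {h : EuclideanSpace ℝ (Fin k) → ℝ≥0∞} (hh : Measurable h) {c : NNReal} (hc : 1 < c) :
    ∃ S : ℕ → Set (EuclideanSpace ℝ (Fin k)), (∀ p, MeasurableSet (S p)) ∧ (∀ p, S p ⊆ Ω) ∧
      (∀ p, ExpandsOn volume f h (c ^ 2) (S p)) ∧
      ∀ x ∈ Ω, ∀ L, HasApproxDerivAt Ω f L x → h x ≤ ENNReal.ofReal |L.det| → h x ≠ 0 →
        x ∈ ⋃ p, S p := by
  choose! ε hε U hU hUnear hUexp using fun (A : EuclideanSpace ℝ (Fin k) →L[ℝ]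
    EuclideanSpace ℝ (Fin k)) (hA : A.det ≠ 0) => exists_nhds_expandsOn volume hA hc
  obtain ⟨T, hTdet, hT, hTcover⟩ := TopologicalSpace.countable_cover_nhdsWithin
    (s := {A | A.det ≠ 0}) (f := U) fun A (hA : A.det ≠ 0) => mem_nhdsWithin_of_mem_nhds (hU A hA)
  have hT0 : T.Nonempty := by
    obtain ⟨A, hA, -⟩ := mem_iUnion₂.1 (hTcover (a := ContinuousLinearMap.id ℝ _)
      (by simp [ContinuousLinearMap.det]))
    exact ⟨A, hA⟩
  have := hT.to_subtype
  have := hT0.to_subtype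
  obtain ⟨e, he⟩ := exists_surjective_nat (T × ℕ × ℕ)
  let q := TopologicalSpace.denseSeq (EuclideanSpace ℝ (Fin k))
  let S : T × ℕ × ℕ → Set (EuclideanSpace ℝ (Fin k)) := fun p =>
    Ω ∩ (nearLinearSet volume f p.1 (ε p.1) p.2.1 ∩
      (Metric.ball (q p.2.2) ((1 / 2) ^ p.2.1 / 2) ∩
        {x | h x ≤ c * ENNReal.ofReal |p.1.1.det|}))
  refine ⟨fun i => S (e i), fun i => hΩ.inter ((measurableSet_nearLinearSet hf _ _ _).inter
    (measurableSet_ball.inter (measurableSet_le hh measurable_const))),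
    fun i => inter_subset_left, fun i => ?_, fun x hx L hL hhL hx0 => ?_⟩
  · refine hUexp _ (hTdet (e i).1.2) _ f (approximatesLinearOn_of_subset_nearLinearSet
      (fun x hx => hx.2.1) fun x hx y hy => ?_) h fun x hx => hx.2.2.2
    have hxq := Metric.mem_ball.1 hx.2.2.1
    have hyq := Metric.mem_ball.1 hy.2.2.1
    linarith [dist_triangle_right x y (q (e i).2.2)]
  · have hLdet : L.det ≠ 0 := fun hdet => hx0 (by simpa [hdet] using hhL)
    obtain ⟨A, hAT, hLA⟩ := mem_iUnion₂.1 (hTcover hLdet)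
    obtain ⟨hnorm, hdet⟩ := hUnear A (hTdet hAT) L hLA
    obtain ⟨j, hj⟩ := exists_mem_nearLinearSet hf (NNReal.coe_pos.2 (hε A (hTdet hAT))) hnorm hL
    obtain ⟨l, hl⟩ := (TopologicalSpace.denseRange_denseSeq
      (EuclideanSpace ℝ (Fin k))).exists_dist_lt x (by positivity : (0 : ℝ) < (1 / 2) ^ j / 2)
    obtain ⟨i, hi⟩ := he (⟨A, hAT⟩, j, l)
    exact mem_iUnion.2 ⟨i, hi ▸ ⟨hx, hj, hl, hhL.trans hdet⟩⟩

end Cover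

section Multiplicity

lemma tsum_indicator_image_le_encard {ι X Y : Type*} {f : X → Y} {S : ι → Set X} {Ω : Set X}
    (hdisj : Pairwise (Function.onFun Disjoint S)) (hSΩ : ∀ p, S p ⊆ Ω) (y : Y) :
    ∑' p, (f '' S p).indicator 1 y ≤ ((f ⁻¹' {y} ∩ Ω).encard : ℝ≥0∞) := by
  have hcount : ∑' p, (f '' S p).indicator (1 : Y → ℝ≥0∞) y =
      ({p | y ∈ f '' S p}.encard : ℝ≥0∞) := by
    rw [← ENNReal.tsum_set_one, tsum_subtype {p | y ∈ f '' S p} fun _ => (1 : ℝ≥0∞)]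
    rfl
  rw [hcount, ENat.toENNReal_le]
  choose x hxS hxy using fun p : {p | y ∈ f '' S p} => p.2
  have hinj : Function.Injective x := fun p q hpq => by
    by_contra hne
    exact disjoint_left.1 (hdisj (Subtype.coe_injective.ne hne)) (hxS p) (hpq ▸ hxS q)
  rw [← ENat.card_coe_set_eq]
  exact hinj.encard_range.trans
    (encard_le_encard (range_subset_iff.2 fun p => ⟨hxy p, hSΩ p (hxS p)⟩))

lemma sum_encard_preimage_le {ι X Y : Type*} [Fintype ι] {Ω : Set X} (f : ι → X → Y) {K L : ℕ}
    {y : Y} (hK : ∀ n, (f n ⁻¹' {y} ∩ Ω).encard ≤ (K : ℕ∞))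
    (hL : ∀ s : Finset ι, L < s.card → y ∉ ⋂ n ∈ s, f n '' Ω) :
    ∑ n, (f n ⁻¹' {y} ∩ Ω).encard ≤ ((K * L : ℕ) : ℕ∞) := by
  classical
  set s : Finset ι := Finset.univ.filter fun n => y ∈ f n '' Ω
  have hcard : s.card ≤ L := not_lt.1 fun h =>
    hL s h (mem_iInter₂.2 fun n hn => (Finset.mem_filter.1 hn).2)
  have hzero : ∀ n ∉ s, (f n ⁻¹' {y} ∩ Ω).encard = 0 := fun n hn => by
    rw [encard_eq_zero, eq_empty_iff_forall_notMem]
    exact fun x hx => hn (Finset.mem_filter.2 ⟨Finset.mem_univ n, x, hx.2, hx.1⟩)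
  calc ∑ n, (f n ⁻¹' {y} ∩ Ω).encard = ∑ n ∈ s, (f n ⁻¹' {y} ∩ Ω).encard :=
        (Finset.sum_subset (Finset.subset_univ s) fun n _ hn => hzero n hn).symm
    _ ≤ s.card • (K : ℕ∞) := Finset.sum_le_card_nsmul _ _ _ fun n _ => hK n
    _ ≤ ((K * L : ℕ) : ℕ∞) := by
        rw [nsmul_eq_mul, ← Nat.cast_mul, Nat.cast_le, mul_comm]
        exact Nat.mul_le_mul_left K hcard

lemma ae_sum_encard_preimage_le {ι X Y : Type*} [Fintype ι] [MeasurableSpace Y] {ν : Measure Y}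
    {Ω : Set X} {Ω' : Set Y} {f : ι → X → Y} (hmaps : ∀ n, MapsTo (f n) Ω Ω') {K L : ℕ}
    (hK : ∀ n, ν {y | y ∈ Ω' ∧ (K : ℕ∞) < (f n ⁻¹' {y} ∩ Ω).encard} = 0)
    (hL : ∀ s : Finset ι, L < s.card → ν (⋂ n ∈ s, f n '' Ω) = 0) :
    ∀ᵐ y ∂ν, ∑ n, ((f n ⁻¹' {y} ∩ Ω).encard : ℝ≥0∞) ≤
      Ω'.indicator (fun _ => (K * L : ℝ≥0∞)) y := by
  have hK' : ∀ᵐ y ∂ν, ∀ n, ¬(y ∈ Ω' ∧ (K : ℕ∞) < (f n ⁻¹' {y} ∩ Ω).encard) :=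
    ae_all_iff.2 fun n => measure_eq_zero_iff_ae_notMem.1 (hK n)
  have hL' : ∀ᵐ y ∂ν, ∀ s : Finset ι, L < s.card → y ∉ ⋂ n ∈ s, f n '' Ω :=
    ae_all_iff.2 fun s => eventually_imp_distrib_left.2 fun hs =>
      measure_eq_zero_iff_ae_notMem.1 (hL s hs)
  filter_upwards [hK', hL'] with y hyK hyL
  by_cases hy : y ∈ Ω'
  · rw [indicator_of_mem hy]
    have hsum := sum_encard_preimage_le f (fun n => not_lt.1 fun h => hyK n ⟨hy, h⟩) hyL
    calc ∑ n, ((f n ⁻¹' {y} ∩ Ω).encard : ℝ≥0∞)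
        = ((∑ n, (f n ⁻¹' {y} ∩ Ω).encard : ℕ∞) : ℝ≥0∞) :=
          (map_sum ENat.toENNRealRingHom _ _).symm
      _ ≤ (((K * L : ℕ) : ℕ∞) : ℝ≥0∞) := ENat.toENNReal_le.2 hsum
      _ = K * L := by simp
  · rw [indicator_of_notMem hy, nonpos_iff_eq_zero]
    refine Finset.sum_eq_zero fun n _ => ?_
    rw [ENat.toENNReal_eq_zero, encard_eq_zero, eq_empty_iff_forall_notMem]
    rintro x ⟨rfl, hxΩ⟩
    exact hy (hmaps n hxΩ)

end Multiplicity

section AreaInequality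

lemma lintegral_mul_comp_le_of_setLIntegral_le {X Y : Type*} [MeasurableSpace X]
    [MeasurableSpace Y] {μ : Measure X} {ν : Measure Y} {f : X → Y} (hf : Measurable f)
    {h : X → ℝ≥0∞} (hh : Measurable h)
    (hle : ∀ D, MeasurableSet D → ∫⁻ x in f ⁻¹' D, h x ∂μ ≤ ν D)
    {u : Y → ℝ≥0∞} (hu : Measurable u) : ∫⁻ x, h x * u (f x) ∂μ ≤ ∫⁻ y, u y ∂ν := by
  have hmap : (μ.withDensity h).map f ≤ ν := Measure.le_iff.2 fun D hD => by
    rw [Measure.map_apply hf hD, withDensity_apply _ (hf hD)]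
    exact hle D hD
  calc ∫⁻ x, h x * u (f x) ∂μ = ∫⁻ y, u y ∂(μ.withDensity h).map f := by
        rw [lintegral_map hu hf, lintegral_withDensity_eq_lintegral_mul _ hh
          (g := fun x => u (f x)) (hu.comp hf)]
        rfl
    _ ≤ ∫⁻ y, u y ∂ν := lintegral_mono' hmap le_rfl

lemma setLIntegral_preimage_le_tsum_measure_image_inter {X : Type*} [MeasurableSpace X]
    {μ : Measure X} {f : X → X} {h : X → ℝ≥0∞} {c : ℝ≥0∞} {Ω : Set X} {T : ℕ → Set X}
    (hT : ∀ p, MeasurableSet (T p)) (hdisj : Pairwise (Function.onFun Disjoint T))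
    (hexp : ∀ p, ExpandsOn μ f h c (T p))
    (hcover : ∀ᵐ x ∂μ.restrict Ω, h x ≠ 0 → x ∈ ⋃ p, T p) (D : Set X) :
    ∫⁻ x in f ⁻¹' D, h x ∂μ.restrict Ω ≤ c * ∑' p, μ (f '' T p ∩ D) := by
  have hsupp : h =ᵐ[μ.restrict Ω] (⋃ p, T p).indicator h := by
    filter_upwards [hcover] with x hx
    rw [eq_comm, indicator_apply_eq_self]
    exact fun hxT => not_not.1 (mt hx hxT)
  calc ∫⁻ x in f ⁻¹' D, h x ∂μ.restrict Ω
      = ∫⁻ x in f ⁻¹' D, (⋃ p, T p).indicator h x ∂μ.restrict Ω :=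
        lintegral_congr_ae (ae_restrict_of_ae hsupp)
    _ ≤ ∫⁻ x in f ⁻¹' D, (⋃ p, T p).indicator h x ∂μ :=
        lintegral_mono' (Measure.restrict_mono_measure Measure.restrict_le_self _) le_rfl
    _ = ∑' p, ∫⁻ x in T p ∩ f ⁻¹' D, h x ∂μ := by
        rw [lintegral_indicator (MeasurableSet.iUnion hT), lintegral_iUnion hT hdisj]
        simp_rw [Measure.restrict_restrict (hT _)]
    _ ≤ ∑' p, c * μ (f '' T p ∩ D) := by
        gcongr with p
        rw [← image_inter_preimage]
        exact (hexp p).setLIntegral_le _ inter_subset_left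
    _ = c * ∑' p, μ (f '' T p ∩ D) := ENNReal.tsum_mul_left

lemma exists_multiplicity_minorant_of_cover {X : Type*} [MeasurableSpace X] [StandardBorelSpace X]
    {μ : Measure X} {f : X → X} (hf : Measurable f) {h : X → ℝ≥0∞} (hh : Measurable h)
    {c : ℝ≥0∞} {Ω : Set X} {S : ℕ → Set X} (hS : ∀ p, MeasurableSet (S p)) (hSΩ : ∀ p, S p ⊆ Ω)
    (hexp : ∀ p, ExpandsOn μ f h c (S p))
    (hcover : ∀ᵐ x ∂μ.restrict Ω, h x ≠ 0 → x ∈ ⋃ p, S p) :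
    ∃ w : X → ℝ≥0∞, Measurable w ∧ (∀ y, w y ≤ ((f ⁻¹' {y} ∩ Ω).encard : ℝ≥0∞)) ∧
      ∀ u : X → ℝ≥0∞, Measurable u →
        ∫⁻ x in Ω, h x * u (f x) ∂μ ≤ c * ∫⁻ y, w y * u y ∂μ := by
  set T := disjointed S
  have hT : ∀ p, MeasurableSet (T p) := fun p => MeasurableSet.disjointed hS p
  have hexpT : ∀ p, ExpandsOn μ f h c (T p) := fun p => (hexp p).mono (disjointed_subset S p)
  have himage : ∀ p, MeasurableSet (f '' T p) := fun p =>
    (hT p).image_of_measurable_injOn hf (hexpT p).injOn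
  set w : X → ℝ≥0∞ := fun y => ∑' p, (f '' T p).indicator 1 y
  have hw : Measurable w := Measurable.tsum fun p => measurable_one.indicator (himage p)
  refine ⟨w, hw, tsum_indicator_image_le_encard (disjoint_disjointed S)
    fun p => (disjointed_subset S p).trans (hSΩ p), fun u hu => ?_⟩
  have hset : ∀ D, MeasurableSet D →
      ∫⁻ x in f ⁻¹' D, h x ∂μ.restrict Ω ≤ (c • μ.withDensity w) D := fun D hD => by
    calc ∫⁻ x in f ⁻¹' D, h x ∂μ.restrict Ω ≤ c * ∑' p, μ (f '' T p ∩ D) :=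
          setLIntegral_preimage_le_tsum_measure_image_inter hT (disjoint_disjointed S) hexpT
            (by rwa [iUnion_disjointed]) D
      _ = (c • μ.withDensity w) D := by
          rw [Measure.smul_apply, smul_eq_mul, withDensity_apply _ hD,
            lintegral_tsum fun p => (measurable_one.indicator (himage p)).aemeasurable]
          simp_rw [lintegral_indicator_one (himage _), Measure.restrict_apply (himage _)]
  calc ∫⁻ x in Ω, h x * u (f x) ∂μ ≤ ∫⁻ y, u y ∂(c • μ.withDensity w) :=
        lintegral_mul_comp_le_of_setLIntegral_le hf hh hset hu
    _ = c * ∫⁻ y, w y * u y ∂μ := by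
        rw [lintegral_smul_measure, lintegral_withDensity_eq_lintegral_mul _ hw hu]
        rfl

variable {k : ℕ} {Ω : Set (EuclideanSpace ℝ (Fin k))}

lemma exists_multiplicity_minorant (hΩ : MeasurableSet Ω)
    {f : EuclideanSpace ℝ (Fin k) → EuclideanSpace ℝ (Fin k)} (hf : Measurable f)
    {h : EuclideanSpace ℝ (Fin k) → ℝ≥0∞} (hh : Measurable h)
    (hhf : ∀ᵐ x ∂volume.restrict Ω, ∃ L, HasApproxDerivAt Ω f L x ∧ h x ≤ ENNReal.ofReal |L.det|)
    {c : NNReal} (hc : 1 < c) :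
    ∃ w : EuclideanSpace ℝ (Fin k) → ℝ≥0∞, Measurable w ∧
      (∀ y, w y ≤ ((f ⁻¹' {y} ∩ Ω).encard : ℝ≥0∞)) ∧
      ∀ u : EuclideanSpace ℝ (Fin k) → ℝ≥0∞, Measurable u →
        ∫⁻ x in Ω, h x * u (f x) ≤ c ^ 2 * ∫⁻ y, w y * u y := by
  obtain ⟨S, hS, hSΩ, hexp, hcover⟩ := exists_seq_cover_expandsOn hΩ hf hh hc
  refine exists_multiplicity_minorant_of_cover hf hh hS hSΩ hexp ?_
  filter_upwards [hhf, ae_restrict_mem hΩ] with x ⟨L, hL, hhL⟩ hx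
  exact hcover x hx L hL hhL

variable {ι : Type*} [Fintype ι] {f : ι → EuclideanSpace ℝ (Fin k) → EuclideanSpace ℝ (Fin k)}
  {K L : ℕ} {h : ι → EuclideanSpace ℝ (Fin k) → ℝ≥0∞} {u : EuclideanSpace ℝ (Fin k) → ℝ≥0∞}

lemma sum_lintegral_mul_comp_le (hΩ : MeasurableSet Ω) (hmaps : ∀ n, MapsTo (f n) Ω Ω)
    (hf : ∀ n, Measurable (f n))
    (hK : ∀ n, volume {y | y ∈ Ω ∧ (K : ℕ∞) < (f n ⁻¹' {y} ∩ Ω).encard} = 0)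
    (hL : ∀ s : Finset ι, L < s.card → volume (⋂ n ∈ s, f n '' Ω) = 0)
    (hh : ∀ n, Measurable (h n))
    (hhf : ∀ n, ∀ᵐ x ∂volume.restrict Ω, ∃ A, HasApproxDerivAt Ω (f n) A x ∧
      h n x ≤ ENNReal.ofReal |A.det|) (hu : Measurable u) :
    ∑ n, ∫⁻ x in Ω, h n x * u (f n x) ≤ K * L * ∫⁻ x in Ω, u x := by
  have hbound : ∀ c : NNReal, 1 < c →
      ∑ n, ∫⁻ x in Ω, h n x * u (f n x) ≤ (c : ℝ≥0∞) ^ 2 * (K * L * ∫⁻ x in Ω, u x) := by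
    intro c hc
    choose w hwm hwK hw using fun n => exists_multiplicity_minorant hΩ (hf n) (hh n) (hhf n) hc
    have hwu : ∀ n, Measurable fun y => w n y * u y := fun n => (hwm n).mul hu
    calc ∑ n, ∫⁻ x in Ω, h n x * u (f n x) ≤ ∑ n, (c : ℝ≥0∞) ^ 2 * ∫⁻ y, w n y * u y :=
          Finset.sum_le_sum fun n _ => hw n u hu
      _ = (c : ℝ≥0∞) ^ 2 * ∫⁻ y, (∑ n, w n y) * u y := by
          simp_rw [Finset.sum_mul]
          rw [lintegral_finsetSum _ fun n _ => hwu n, Finset.mul_sum]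
      _ ≤ (c : ℝ≥0∞) ^ 2 * ∫⁻ y, Ω.indicator (fun _ => (K * L : ℝ≥0∞)) y * u y := by
          refine mul_right_mono (lintegral_mono_ae ?_)
          filter_upwards [ae_sum_encard_preimage_le hmaps hK hL] with y hy
          gcongr
          exact (Finset.sum_le_sum fun n _ => hwK n y).trans hy
      _ = (c : ℝ≥0∞) ^ 2 * (K * L * ∫⁻ x in Ω, u x) := by
          simp_rw [← indicator_mul_left Ω (fun _ => (K * L : ℝ≥0∞)) u]
          rw [lintegral_indicator hΩ, lintegral_const_mul _ hu]
  obtain ⟨c, -, hc, hclim⟩ := exists_seq_strictAnti_tendsto (1 : NNReal)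
  have hlim : Tendsto (fun i => (c i : ℝ≥0∞) ^ 2 * (K * L * ∫⁻ x in Ω, u x)) atTop
      (𝓝 ((1 : ℝ≥0∞) ^ 2 * (K * L * ∫⁻ x in Ω, u x))) :=
    ENNReal.Tendsto.mul_const (ENNReal.Tendsto.pow (ENNReal.tendsto_coe.2 hclim))
      (Or.inl (by simp))
  simpa using ge_of_tendsto' hlim fun i => hbound (c i) (hc i)

lemma sum_lintegral_mul_comp_le_mul (hΩ : MeasurableSet Ω) (hmaps : ∀ n, MapsTo (f n) Ω Ω)
    (hf : ∀ n, Measurable (f n))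
    (hK : ∀ n, volume {y | y ∈ Ω ∧ (K : ℕ∞) < (f n ⁻¹' {y} ∩ Ω).encard} = 0)
    (hL : ∀ s : Finset ι, L < s.card → volume (⋂ n ∈ s, f n '' Ω) = 0)
    (hh : ∀ n, Measurable (h n)) {b : NNReal}
    (hhf : ∀ n, ∀ᵐ x ∂volume.restrict Ω, ∃ A, HasApproxDerivAt Ω (f n) A x ∧
      h n x ≤ b * ENNReal.ofReal |A.det|) (hu : Measurable u) :
    ∑ n, ∫⁻ x in Ω, h n x * u (f n x) ≤ b * (K * L) * ∫⁻ x in Ω, u x := by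
  have hmeas : ∀ n, Measurable fun x => h n x * u (f n x) :=
    fun n => (hh n).mul (hu.comp (hf n))
  rcases eq_or_ne b 0 with rfl | hb
  · refine (Finset.sum_eq_zero fun n _ => ?_).le.trans zero_le
    rw [lintegral_eq_zero_iff (hmeas n)]
    filter_upwards [hhf n] with x ⟨A, _, hA⟩
    simp_all
  · have hb0 : (b : ℝ≥0∞) ≠ 0 := ENNReal.coe_ne_zero.2 hb
    have hscaled := sum_lintegral_mul_comp_le hΩ hmaps hf hK hL
      (fun n => (hh n).const_mul (b : ℝ≥0∞)⁻¹) (fun n => (hhf n).mono fun x ⟨A, hA, hhA⟩ =>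
        ⟨A, hA, (ENNReal.inv_mul_le_iff hb0 ENNReal.coe_ne_top).2 hhA⟩) hu
    simp_rw [mul_assoc] at hscaled
    simp_rw [lintegral_const_mul _ (hmeas _)] at hscaled
    rw [← Finset.mul_sum, ENNReal.inv_mul_le_iff hb0 ENNReal.coe_ne_top] at hscaled
    simpa only [mul_assoc] using hscaled

end AreaInequality

section KFunctional

variable {X : Type*} [MeasurableSpace X] {μ : Measure X} {u v : X → ℝ≥0∞} {t : ℝ≥0∞}

/-- The `K`-functional of `u` for the couple `(L¹, L^∞)` of the measure `μ`. It is encoded by the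
layer-cake formula `∫₀^∞ min (μ {u > s}) t ds`, which links it to the distribution function;
`isLeast_kFunctional` identifies it with the infimum of `t * r + ‖(u - r)⁺‖₁` over the
levels `r`. -/
noncomputable def kFunctional (μ : Measure X) (u : X → ℝ≥0∞) (t : ℝ≥0∞) : ℝ≥0∞ :=
  ∫⁻ s in Ioi (0 : ℝ), min (μ {x | ENNReal.ofReal s < u x}) t

lemma antitone_measure_ofReal_lt (μ : Measure X) (u : X → ℝ≥0∞) :
    Antitone fun s : ℝ => μ {x | ENNReal.ofReal s < u x} := fun _ _ hst =>
  measure_mono fun _ hx => (ENNReal.ofReal_le_ofReal hst).trans_lt hx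

lemma volume_restrict_Ioi_ofReal_lt {r : ℝ} (hr : 0 ≤ r) (a : ℝ≥0∞) :
    volume.restrict (Ioi r) {s | ENNReal.ofReal s < a} = a - ENNReal.ofReal r := by
  rw [Measure.restrict_apply (measurableSet_lt (by fun_prop) measurable_const)]
  rcases eq_or_ne a ∞ with rfl | ha
  · simp
  · have hIoo : {s : ℝ | ENNReal.ofReal s < a} ∩ Ioi r = Ioo r a.toReal := by
      ext s
      rw [mem_inter_iff, mem_ofPred_eq, mem_Ioi, and_comm, mem_Ioo]
      exact and_congr_right fun hs => ENNReal.ofReal_lt_iff_lt_toReal (hr.trans hs.le) ha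
    rw [hIoo, Real.volume_Ioo, ENNReal.ofReal_sub _ hr, ENNReal.ofReal_toReal ha]

lemma setLIntegral_Ioi_measure_ofReal_lt [SFinite μ] (hu : Measurable u) {r : ℝ} (hr : 0 ≤ r) :
    ∫⁻ s in Ioi r, μ {x | ENNReal.ofReal s < u x} = ∫⁻ x, (u x - ENNReal.ofReal r) ∂μ := by
  have hgraph : MeasurableSet {q : ℝ × X | ENNReal.ofReal q.1 < u q.2} :=
    measurableSet_lt (by fun_prop) (by fun_prop)
  calc ∫⁻ s in Ioi r, μ {x | ENNReal.ofReal s < u x}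
      = (volume.restrict (Ioi r)).prod μ {q : ℝ × X | ENNReal.ofReal q.1 < u q.2} :=
        (Measure.prod_apply hgraph).symm
    _ = ∫⁻ x, volume.restrict (Ioi r) {s | ENNReal.ofReal s < u x} ∂μ :=
        Measure.prod_apply_symm hgraph
    _ = ∫⁻ x, (u x - ENNReal.ofReal r) ∂μ := by
        simp_rw [volume_restrict_Ioi_ofReal_lt hr]

lemma kFunctional_le_mul_add_lintegral [SFinite μ] (hu : Measurable u) (t r : ℝ≥0∞) :
    kFunctional μ u t ≤ t * r + ∫⁻ x, (u x - r) ∂μ := by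
  rcases eq_or_ne t 0 with rfl | ht
  · simp [kFunctional]
  rcases eq_or_ne r ∞ with rfl | hr
  · simp [ht]
  lift r to NNReal using hr
  calc kFunctional μ u t
      ≤ (∫⁻ s in Ioc 0 (r : ℝ), min (μ {x | ENNReal.ofReal s < u x}) t) +
        ∫⁻ s in Ioi (r : ℝ), min (μ {x | ENNReal.ofReal s < u x}) t := by
        rw [kFunctional, ← Ioc_union_Ioi_eq_Ioi r.coe_nonneg]
        exact lintegral_union_le _ _ _
    _ ≤ (∫⁻ _ in Ioc 0 (r : ℝ), t) + ∫⁻ s in Ioi (r : ℝ), μ {x | ENNReal.ofReal s < u x} :=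
        add_le_add (lintegral_mono fun s => min_le_right _ _)
          (lintegral_mono fun s => min_le_left _ _)
    _ = t * r + ∫⁻ x, (u x - r) ∂μ := by
        rw [setLIntegral_const, Real.volume_Ioc, sub_zero,
          setLIntegral_Ioi_measure_ofReal_lt hu r.coe_nonneg, ENNReal.ofReal_coe_nnreal]

lemma kFunctional_eq_top (ht : t ≠ 0)
    (h : ∀ s : ℝ, 0 < s → t < μ {x | ENNReal.ofReal s < u x}) : kFunctional μ u t = ∞ := by
  rw [kFunctional, setLIntegral_congr_fun measurableSet_Ioi fun s hs => min_eq_right (h s hs).le,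
    setLIntegral_const, Real.volume_Ioi, ENNReal.mul_top ht]

/- The optimal level is the decreasing rearrangement of `u` at `t`, i.e. the threshold below which
the distribution function exceeds `t`: there the minimum in `kFunctional` equals `t`, and above it
the distribution function. -/
lemma exists_mul_add_lintegral_le_kFunctional [SFinite μ] (hu : Measurable u) (t : ℝ≥0∞) :
    ∃ r : ℝ≥0∞, t * r + ∫⁻ x, (u x - r) ∂μ ≤ kFunctional μ u t := by
  rcases eq_or_ne t 0 with rfl | ht
  · exact ⟨∞, by simp⟩
  set S : Set ℝ := {s | 0 ≤ s ∧ μ {x | ENNReal.ofReal s < u x} ≤ t}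
  rcases S.eq_empty_or_nonempty with hempty | hne
  · refine ⟨0, le_top.trans_eq (kFunctional_eq_top ht fun s hs => not_le.1 fun h => ?_).symm⟩
    exact notMem_empty s (hempty ▸ ⟨hs.le, h⟩)
  · have hr : 0 ≤ sInf S := le_csInf hne fun s hs => hs.1
    have hbdd : BddBelow S := ⟨0, fun s hs => hs.1⟩
    have hbelow : ∀ s ∈ Ioo 0 (sInf S), t ≤ min (μ {x | ENNReal.ofReal s < u x}) t := fun s hs =>
      le_min (le_of_not_ge fun h => notMem_of_lt_csInf hs.2 hbdd ⟨hs.1.le, h⟩) le_rfl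
    have habove : ∀ s ∈ Ioi (sInf S), μ {x | ENNReal.ofReal s < u x} ≤
        min (μ {x | ENNReal.ofReal s < u x}) t := fun s hs => by
      obtain ⟨s', hs', hlt⟩ := (csInf_lt_iff hbdd hne).1 hs
      exact le_min le_rfl ((antitone_measure_ofReal_lt μ u hlt.le).trans hs'.2)
    refine ⟨ENNReal.ofReal (sInf S), ?_⟩
    calc t * ENNReal.ofReal (sInf S) + ∫⁻ x, (u x - ENNReal.ofReal (sInf S)) ∂μ
        = (∫⁻ _ in Ioo 0 (sInf S), t) +
          ∫⁻ s in Ioi (sInf S), μ {x | ENNReal.ofReal s < u x} := by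
          rw [setLIntegral_const, Real.volume_Ioo, sub_zero,
            setLIntegral_Ioi_measure_ofReal_lt hu hr]
      _ ≤ (∫⁻ s in Ioo 0 (sInf S), min (μ {x | ENNReal.ofReal s < u x}) t) +
          ∫⁻ s in Ioi (sInf S), min (μ {x | ENNReal.ofReal s < u x}) t :=
          add_le_add (setLIntegral_mono' measurableSet_Ioo hbelow)
            (setLIntegral_mono' measurableSet_Ioi habove)
      _ = ∫⁻ s in Ioo 0 (sInf S) ∪ Ioi (sInf S), min (μ {x | ENNReal.ofReal s < u x}) t :=
          (lintegral_union measurableSet_Ioi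
            (disjoint_left.2 fun s hs hs' => lt_asymm hs.2 hs')).symm
      _ ≤ kFunctional μ u t :=
          lintegral_mono_set (union_subset (fun s hs => hs.1) fun s hs => hr.trans_lt hs)

lemma isLeast_kFunctional [SFinite μ] (hu : Measurable u) (t : ℝ≥0∞) :
    IsLeast (range fun r : ℝ≥0∞ => t * r + ∫⁻ x, (u x - r) ∂μ) (kFunctional μ u t) := by
  obtain ⟨r, hr⟩ := exists_mul_add_lintegral_le_kFunctional (μ := μ) hu t
  exact ⟨⟨r, hr.antisymm (kFunctional_le_mul_add_lintegral hu t r)⟩,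
    forall_mem_range.2 (kFunctional_le_mul_add_lintegral hu t)⟩

lemma kFunctional_mono_ae (huv : u ≤ᵐ[μ] v) (t : ℝ≥0∞) :
    kFunctional μ u t ≤ kFunctional μ v t :=
  lintegral_mono fun _ => min_le_min_right _ <| measure_mono_ae <| huv.mono fun _ hx hs =>
    lt_of_lt_of_le hs hx

lemma monotone_kFunctional (μ : Measure X) (u : X → ℝ≥0∞) : Monotone (kFunctional μ u) :=
  fun _ _ h => lintegral_mono fun _ => min_le_min_left _ h

lemma kFunctional_tsum_le [SFinite μ] {ι : Type*} [Countable ι] {u : ι → X → ℝ≥0∞}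
    (hu : ∀ i, Measurable (u i)) (t : ℝ≥0∞) :
    kFunctional μ (fun x => ∑' i, u i x) t ≤ ∑' i, kFunctional μ (u i) t := by
  choose r hr using fun i => (isLeast_kFunctional (μ := μ) (hu i) t).1
  calc kFunctional μ (fun x => ∑' i, u i x) t
      ≤ t * ∑' i, r i + ∫⁻ x, (∑' i, u i x - ∑' i, r i) ∂μ :=
        kFunctional_le_mul_add_lintegral (Measurable.tsum hu) t _
    _ ≤ t * ∑' i, r i + ∫⁻ x, ∑' i, (u i x - r i) ∂μ := by
        gcongr with x
        rw [tsub_le_iff_right, ← ENNReal.tsum_add]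
        exact ENNReal.tsum_le_tsum fun i => le_tsub_add
    _ = ∑' i, (t * r i + ∫⁻ x, (u i x - r i) ∂μ) := by
        rw [ENNReal.tsum_add, ENNReal.tsum_mul_left,
          lintegral_tsum fun i => ((hu i).sub_const _).aemeasurable]
    _ = ∑' i, kFunctional μ (u i) t := tsum_congr hr

lemma kFunctional_le_mul [SFinite μ] (hu : Measurable u) (hv : Measurable v) {c : ℝ≥0∞}
    (h : ∀ r, ∫⁻ x, (v x - c * r) ∂μ ≤ c * ∫⁻ x, (u x - r) ∂μ) (t : ℝ≥0∞) :
    kFunctional μ v t ≤ c * kFunctional μ u t := by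
  obtain ⟨r, hr⟩ := (isLeast_kFunctional (μ := μ) hu t).1
  calc kFunctional μ v t ≤ t * (c * r) + ∫⁻ x, (v x - c * r) ∂μ :=
        kFunctional_le_mul_add_lintegral hv t _
    _ ≤ t * (c * r) + c * ∫⁻ x, (u x - r) ∂μ := by gcongr; exact h r
    _ = c * (t * r + ∫⁻ x, (u x - r) ∂μ) := by ring
    _ = c * kFunctional μ u t := by rw [← hr]

lemma exists_lintegral_sub_lt_top [SFinite μ] (hu : Measurable u) (ht : t ≠ 0)
    (h : kFunctional μ u t < ∞) : ∃ r : ℝ≥0∞, r < ∞ ∧ ∫⁻ x, (u x - r) ∂μ < ∞ := by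
  obtain ⟨r, hr⟩ := (isLeast_kFunctional (μ := μ) hu t).1
  obtain ⟨htr, hint⟩ := ENNReal.add_lt_top.1 (hr.trans_lt h)
  exact ⟨r, ENNReal.lt_top_of_mul_ne_top_right htr.ne ht, hint⟩

lemma ae_eq_zero_of_kFunctional_eq_zero [SFinite μ] (hu : Measurable u) (ht : t ≠ 0)
    (h : kFunctional μ u t = 0) : u =ᵐ[μ] 0 := by
  obtain ⟨r, hr⟩ := (isLeast_kFunctional (μ := μ) hu t).1
  obtain ⟨htr, hint⟩ := add_eq_zero.1 (hr.trans h)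
  obtain rfl : r = 0 := (mul_eq_zero.1 htr).resolve_left ht
  simpa only [tsub_zero, lintegral_eq_zero_iff hu] using hint

end KFunctional

section InterpolationNorm

variable {X : Type*} [MeasurableSpace X] {μ : Measure X} {ν : Measure ℝ≥0∞} {u v : X → ℝ≥0∞}

/-- The interpolation norm `∫ K(t, u) dν(t)` of `u` for the couple `(L¹, L^∞)` of `μ`, with the
parameter measure `ν`. Every Lorentz norm used here has this form, see
`lorentzNorm_eq_interpENorm`. -/
noncomputable def interpENorm (μ : Measure X) (ν : Measure ℝ≥0∞) (u : X → ℝ≥0∞) : ℝ≥0∞ :=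
  ∫⁻ t, kFunctional μ u t ∂ν

lemma measurable_kFunctional (μ : Measure X) (u : X → ℝ≥0∞) : Measurable (kFunctional μ u) :=
  (monotone_kFunctional μ u).measurable

lemma interpENorm_mono_ae (huv : u ≤ᵐ[μ] v) : interpENorm μ ν u ≤ interpENorm μ ν v :=
  lintegral_mono (kFunctional_mono_ae huv)

lemma interpENorm_tsum_le [SFinite μ] {ι : Type*} [Countable ι] {u : ι → X → ℝ≥0∞}
    (hu : ∀ i, Measurable (u i)) :
    interpENorm μ ν (fun x => ∑' i, u i x) ≤ ∑' i, interpENorm μ ν (u i) :=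
  (lintegral_mono (kFunctional_tsum_le hu)).trans_eq
    (lintegral_tsum fun i => (measurable_kFunctional μ (u i)).aemeasurable)

lemma interpENorm_add_le [SFinite μ] (hu : Measurable u) (hv : Measurable v) :
    interpENorm μ ν (fun x => u x + v x) ≤ interpENorm μ ν u + interpENorm μ ν v := by
  have h := interpENorm_tsum_le (μ := μ) (ν := ν) (u := fun i : Bool => cond i v u)
    (Bool.rec hu hv)
  simpa only [tsum_bool, Bool.cond_true, Bool.cond_false] using h

lemma interpENorm_le_mul [SFinite μ] (hu : Measurable u) (hv : Measurable v) {c : ℝ≥0∞}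
    (h : ∀ r, ∫⁻ x, (v x - c * r) ∂μ ≤ c * ∫⁻ x, (u x - r) ∂μ) :
    interpENorm μ ν v ≤ c * interpENorm μ ν u :=
  (lintegral_mono (kFunctional_le_mul hu hv h)).trans_eq
    (lintegral_const_mul _ (measurable_kFunctional μ u))

lemma exists_lintegral_sub_lt_top_of_interpENorm [SFinite μ] (hν : ∃ᵐ t ∂ν, t ≠ 0)
    (hu : Measurable u) (h : interpENorm μ ν u < ∞) :
    ∃ r : ℝ≥0∞, r < ∞ ∧ ∫⁻ x, (u x - r) ∂μ < ∞ := by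
  obtain ⟨t, ht, hK⟩ := (hν.and_eventually (ae_lt_top (measurable_kFunctional μ u) h.ne)).exists
  exact exists_lintegral_sub_lt_top hu ht hK

lemma ae_lt_top_of_interpENorm_lt_top [SFinite μ] (hν : ∃ᵐ t ∂ν, t ≠ 0) (hu : Measurable u)
    (h : interpENorm μ ν u < ∞) : ∀ᵐ x ∂μ, u x < ∞ := by
  obtain ⟨r, hr, hur⟩ := exists_lintegral_sub_lt_top_of_interpENorm hν hu h
  filter_upwards [ae_lt_top (hu.sub_const r) hur.ne] with x hx
  exact (le_tsub_add (a := r)).trans_lt (ENNReal.add_lt_top.2 ⟨hx, hr⟩)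

lemma ae_eq_zero_of_interpENorm_eq_zero [SFinite μ] (hν : ∃ᵐ t ∂ν, t ≠ 0) (hu : Measurable u)
    (h : interpENorm μ ν u = 0) : u =ᵐ[μ] 0 := by
  obtain ⟨t, ht, hK⟩ := (hν.and_eventually
    ((lintegral_eq_zero_iff (measurable_kFunctional μ u)).1 h)).exists
  exact ae_eq_zero_of_kFunctional_eq_zero hu ht hK

lemma locallyIntegrableOn_of_interpENorm_lt_top {E : Type*} [NormedAddCommGroup E]
    [TopologicalSpace X] {μ : Measure X} [SFinite μ] [IsLocallyFiniteMeasure μ] {Ω : Set X}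
    (hν : ∃ᵐ t ∂ν, t ≠ 0) {f : X → E} (hf : StronglyMeasurable f)
    (h : interpENorm (μ.restrict Ω) ν (fun x => ‖f x‖ₑ) < ∞) : LocallyIntegrableOn f Ω μ := by
  obtain ⟨r, hr, hfr⟩ := exists_lintegral_sub_lt_top_of_interpENorm hν hf.enorm h
  intro x _
  obtain ⟨V, hV, hVfin⟩ := μ.finiteAt_nhds x
  refine ⟨Ω ∩ V, inter_mem_nhdsWithin _ hV, hf.aestronglyMeasurable, ?_⟩
  calc ∫⁻ y in Ω ∩ V, ‖f y‖ₑ ∂μ ≤ ∫⁻ y in Ω ∩ V, ((‖f y‖ₑ - r) + r) ∂μ :=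
        lintegral_mono fun y => le_tsub_add
    _ = (∫⁻ y in Ω ∩ V, (‖f y‖ₑ - r) ∂μ) + r * μ (Ω ∩ V) := by
        rw [lintegral_add_right _ measurable_const, setLIntegral_const]
    _ < ∞ := ENNReal.add_lt_top.2 ⟨(lintegral_mono_set inter_subset_left).trans_lt hfr,
        ENNReal.mul_lt_top hr ((measure_mono inter_subset_right).trans_lt hVfin)⟩

/-- The function `Φ` is a mixture `a ↦ ∫ min a t dν(t)` of the truncations `a ↦ min a t`. It turns
`∫ Φ(μ {u > s}) ds` into an interpolation norm. -/
def IsMinMixture (Φ : ℝ≥0∞ → ℝ≥0∞) : Prop :=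
  ∃ ν : Measure ℝ≥0∞, SFinite ν ∧ ∀ a, Φ a = ∫⁻ t, min a t ∂ν

lemma lintegral_measure_ofReal_lt_eq_interpENorm [SFinite ν] {Φ : ℝ≥0∞ → ℝ≥0∞}
    (hΦ : ∀ a, Φ a = ∫⁻ t, min a t ∂ν) (μ : Measure X) (u : X → ℝ≥0∞) :
    ∫⁻ s in Ioi (0 : ℝ), Φ (μ {x | ENNReal.ofReal s < u x}) = interpENorm μ ν u := by
  have hdistr : Measurable fun q : ℝ × ℝ≥0∞ => min (μ {x | ENNReal.ofReal q.1 < u x}) q.2 :=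
    ((antitone_measure_ofReal_lt μ u).measurable.comp measurable_fst).min measurable_snd
  simp_rw [hΦ]
  exact lintegral_lintegral_swap hdistr.aemeasurable

lemma lorentzNorm_eq_interpENorm {k : ℕ} {𝕜 : Type*} [RCLike 𝕜] [SFinite ν]
    {Ω : Set (EuclideanSpace ℝ (Fin k))} (hΩ : MeasurableSet Ω) {σ : ℝ → ℝ}
    (hσ : ∀ a, extInv σ a = ∫⁻ t, min a t ∂ν) (f : EuclideanSpace ℝ (Fin k) → 𝕜) :
    lorentzNorm Ω σ f = interpENorm (volume.restrict Ω) ν fun x => ‖f x‖ₑ := by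
  rw [← lintegral_measure_ofReal_lt_eq_interpENorm hσ]
  refine setLIntegral_congr_fun measurableSet_Ioi fun s hs => ?_
  have hlevel : {x | x ∈ Ω ∧ s < ‖f x‖} = {x | ENNReal.ofReal s < ‖f x‖ₑ} ∩ Ω := by
    ext x
    rw [mem_inter_iff, mem_ofPred_eq, mem_ofPred_eq, ← ofReal_norm,
      ENNReal.ofReal_lt_ofReal_iff_of_nonneg (le_of_lt hs), and_comm]
  rw [distribFn, hlevel, Measure.restrict_apply' hΩ]

lemma frequently_ne_zero_of_extInv_eq {σ : ℝ → ℝ} (hσ : ∀ a, extInv σ a = ∫⁻ t, min a t ∂ν) :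
    ∃ᵐ t ∂ν, t ≠ 0 := by
  intro h
  have htop : (∞ : ℝ≥0∞) = ∫⁻ t, t ∂ν := by simpa [extInv] using hσ ∞
  rw [lintegral_congr_ae (h.mono fun t ht => not_not.1 ht), lintegral_zero] at htop
  exact ENNReal.top_ne_zero htop

end InterpolationNorm

section PowerMixture

lemma lintegral_Ioc_ofReal_rpow {a q : ℝ} (ha : 0 ≤ a) (hq : -1 < q) :
    ∫⁻ t in Ioc 0 a, ENNReal.ofReal (t ^ q) = ENNReal.ofReal (a ^ (q + 1) / (q + 1)) := by
  have hint : IntegrableOn (fun t : ℝ => t ^ q) (Ioc 0 a) :=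
    (intervalIntegrable_iff_integrableOn_Ioc_of_le ha).1
      (intervalIntegral.intervalIntegrable_rpow' hq)
  rw [← ofReal_integral_eq_lintegral_ofReal hint
      ((ae_restrict_mem measurableSet_Ioc).mono fun t ht => Real.rpow_nonneg ht.1.le q),
    ← intervalIntegral.integral_of_le ha, integral_rpow (Or.inl hq),
    Real.zero_rpow (by linarith), sub_zero]

lemma lintegral_Ioi_ofReal_rpow {a q : ℝ} (ha : 0 < a) (hq : q < -1) :
    ∫⁻ t in Ioi a, ENNReal.ofReal (t ^ q) = ENNReal.ofReal (-a ^ (q + 1) / (q + 1)) := by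
  rw [← ofReal_integral_eq_lintegral_ofReal (integrableOn_Ioi_rpow_of_lt hq ha)
      ((ae_restrict_mem measurableSet_Ioi).mono fun t ht => Real.rpow_nonneg (ha.trans ht).le q),
    integral_Ioi_rpow_of_lt hq ha]

lemma lintegral_rpow_mul_min_ofReal {a p : ℝ} (ha : 0 < a) (hp0 : 0 < p) (hp1 : p < 1) :
    ∫⁻ t in Ioi (0 : ℝ), ENNReal.ofReal (t ^ (p - 2)) * min (ENNReal.ofReal a) (ENNReal.ofReal t) =
      ENNReal.ofReal (a ^ p / (p * (1 - p))) := by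
  have hsmall : ∫⁻ t in Ioc 0 a,
      ENNReal.ofReal (t ^ (p - 2)) * min (ENNReal.ofReal a) (ENNReal.ofReal t) =
        ENNReal.ofReal (a ^ p / p) := by
    calc _ = ∫⁻ t in Ioc 0 a, ENNReal.ofReal (t ^ (p - 1)) := by
          refine setLIntegral_congr_fun measurableSet_Ioc fun t ht => ?_
          rw [min_eq_right (ENNReal.ofReal_le_ofReal ht.2),
            ← ENNReal.ofReal_mul (Real.rpow_nonneg ht.1.le _), ← Real.rpow_add_one ht.1.ne']
          ring_nf
      _ = ENNReal.ofReal (a ^ p / p) := by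
          rw [lintegral_Ioc_ofReal_rpow ha.le (by linarith), sub_add_cancel]
  have hlarge : ∫⁻ t in Ioi a,
      ENNReal.ofReal (t ^ (p - 2)) * min (ENNReal.ofReal a) (ENNReal.ofReal t) =
        ENNReal.ofReal (a ^ p / (1 - p)) := by
    calc _ = ∫⁻ t in Ioi a, ENNReal.ofReal (t ^ (p - 2)) * ENNReal.ofReal a :=
          setLIntegral_congr_fun measurableSet_Ioi fun t ht => by
            rw [min_eq_left (ENNReal.ofReal_le_ofReal (le_of_lt ht))]
      _ = ENNReal.ofReal (a ^ (p - 1) / (1 - p) * a) := by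
          rw [lintegral_mul_const _ (by fun_prop), lintegral_Ioi_ofReal_rpow ha (by linarith),
            ← ENNReal.ofReal_mul' ha.le, show p - 2 + 1 = p - 1 by ring, ← neg_sub 1 p,
            neg_div_neg_eq]
      _ = ENNReal.ofReal (a ^ p / (1 - p)) := by
          rw [div_mul_eq_mul_div, ← Real.rpow_add_one ha.ne', sub_add_cancel]
  have hq : 0 < 1 - p := by linarith
  rw [← Ioc_union_Ioi_eq_Ioi ha.le, lintegral_union measurableSet_Ioi
    (disjoint_left.2 fun t ht ht' => not_lt.2 ht.2 ht'), hsmall, hlarge,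
    ← ENNReal.ofReal_add (by positivity) (by positivity)]
  congr 1
  field_simp
  ring

lemma lintegral_rpow_mul_min {p : ℝ} (hp0 : 0 < p) (hp1 : p < 1) (a : ℝ≥0∞) :
    ∫⁻ t in Ioi (0 : ℝ), ENNReal.ofReal (t ^ (p - 2)) * min a (ENNReal.ofReal t) =
      (ENNReal.ofReal (p * (1 - p)))⁻¹ * a ^ p := by
  have hq : 0 < p * (1 - p) := mul_pos hp0 (by linarith)
  have hfin : ∀ r : NNReal,
      ∫⁻ t in Ioi (0 : ℝ), ENNReal.ofReal (t ^ (p - 2)) * min (r : ℝ≥0∞) (ENNReal.ofReal t) =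
        (ENNReal.ofReal (p * (1 - p)))⁻¹ * (r : ℝ≥0∞) ^ p := fun r => by
    rcases eq_or_ne r 0 with rfl | hr
    · simp [hp0]
    have hr : 0 < (r : ℝ) := by positivity
    have h := lintegral_rpow_mul_min_ofReal hr hp0 hp1
    rw [ENNReal.ofReal_coe_nnreal] at h
    rw [h, ENNReal.ofReal_div_of_pos hq, ← ENNReal.ofReal_rpow_of_pos hr,
      ENNReal.ofReal_coe_nnreal, div_eq_mul_inv, mul_comm]
  rcases eq_or_ne a ∞ with rfl | ha
  · have hlim : Tendsto (fun n : ℕ => (ENNReal.ofReal (p * (1 - p)))⁻¹ * (n : ℝ≥0∞) ^ p) atTop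
        (𝓝 ((ENNReal.ofReal (p * (1 - p)))⁻¹ * ∞ ^ p)) :=
      ENNReal.Tendsto.const_mul
        ((ENNReal.continuous_rpow_const.tendsto ∞).comp ENNReal.tendsto_nat_nhds_top)
        (Or.inr (by simp [hq]))
    have htop : (ENNReal.ofReal (p * (1 - p)))⁻¹ * ∞ ^ p = ∞ := by
      simp [hp0, ENNReal.mul_top]
    refine le_antisymm (le_top.trans_eq htop.symm) (le_of_tendsto' hlim fun n => ?_)
    rw [← ENNReal.coe_natCast, ← hfin]
    exact lintegral_mono fun t => mul_right_mono (min_le_min_right _ le_top)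
  · lift a to NNReal using ha
    exact hfin a

lemma isMinMixture_rpow {p : ℝ} (hp0 : 0 < p) (hp1 : p < 1) (b : ℝ≥0∞) :
    IsMinMixture fun a => (b * a) ^ p := by
  have hq : 0 < p * (1 - p) := mul_pos hp0 (by linarith)
  refine ⟨(b ^ p * ENNReal.ofReal (p * (1 - p))) • ((volume.restrict (Ioi 0)).withDensity
    fun t : ℝ => ENNReal.ofReal (t ^ (p - 2))).map ENNReal.ofReal, inferInstance, fun a => ?_⟩
  rw [lintegral_smul_measure, lintegral_map (by fun_prop) (by fun_prop),
    lintegral_withDensity_eq_lintegral_mul _ (by fun_prop) (by fun_prop)]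
  simp only [Pi.mul_apply, smul_eq_mul]
  rw [lintegral_rpow_mul_min hp0 hp1, mul_assoc, ENNReal.mul_inv_cancel_left
    (by simpa using hq) ENNReal.ofReal_ne_top, ENNReal.mul_rpow_of_nonneg _ _ hp0.le]

lemma extInv_eq_rpow {σ : ℝ → ℝ} {b p : ℝ} (hb : 0 < b) (hp : 0 < p)
    (hσ : ∀ a, 0 ≤ a → σ a = (b * a) ^ p) (a : ℝ≥0∞) :
    extInv σ a = (ENNReal.ofReal b * a) ^ p := by
  rcases eq_or_ne a ∞ with rfl | ha
  · simp [extInv, ENNReal.mul_top, hb, hp]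
  · rw [extInv, if_neg ha, hσ _ ENNReal.toReal_nonneg,
      ← ENNReal.ofReal_rpow_of_nonneg (by positivity) hp.le, ENNReal.ofReal_mul hb.le,
      ENNReal.ofReal_toReal ha]

lemma leftInverse_eq_mul_rpow_inv {m : ℕ} (hm : m ≠ 0) {ψ τ σ : ℝ → ℝ}
    (hψ : ∀ t, ψ t = m * t ^ m) (hτ0 : τ 0 = 0) (hτ : ∀ t, 0 < t → τ t = 1 / ψ (1 / t))
    (hσ : ∀ t, 0 ≤ t → σ (τ t) = t) {a : ℝ} (ha : 0 ≤ a) : σ a = (m * a) ^ (m : ℝ)⁻¹ := by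
  have hm0 : (0 : ℝ) < m := Nat.cast_pos.2 (Nat.pos_of_ne_zero hm)
  have hτa : τ ((m * a) ^ (m : ℝ)⁻¹) = a := by
    rcases ha.eq_or_lt with rfl | ha
    · rw [mul_zero, Real.zero_rpow (inv_ne_zero hm0.ne'), hτ0]
    · rw [hτ _ (by positivity), hψ, div_pow, one_pow,
        Real.rpow_inv_natCast_pow (by positivity) hm]
      field_simp
  rw [← hσ ((m * a) ^ (m : ℝ)⁻¹) (by positivity), hτa]

lemma isMinMixture_extInv_of_leftInverse {m : ℕ} (hm : 1 < m) {ψ τ σ : ℝ → ℝ}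
    (hψ : ∀ t, ψ t = m * t ^ m) (hτ0 : τ 0 = 0) (hτ : ∀ t, 0 < t → τ t = 1 / ψ (1 / t))
    (hσ : ∀ t, 0 ≤ t → σ (τ t) = t) : IsMinMixture (extInv σ) := by
  have hm1 : (1 : ℝ) < m := Nat.one_lt_cast.2 hm
  have hm0 : (0 : ℝ) < m := zero_lt_one.trans hm1
  rw [funext (extInv_eq_rpow hm0 (inv_pos.2 hm0) fun a ha =>
    leftInverse_eq_mul_rpow_inv (by omega) hψ hτ0 hτ hσ ha)]
  exact isMinMixture_rpow (inv_pos.2 hm0) (inv_lt_one_of_one_lt₀ hm1) _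

end PowerMixture

section ModulusOperator

/-- The modulus `u ↦ ∑ n, |g n| · (u ∘ f n)` of the operator `Pop f g`: the positive operator that
dominates it pointwise. It acts on `[0, ∞]`-valued functions so that it can be applied to sums of
series of moduli without knowing that they converge. -/
noncomputable def modulusPop {X ι 𝕜 : Type*} [Fintype ι] [NormedRing 𝕜] (f : ι → X → X)
    (g : ι → X → 𝕜) (u : X → ℝ≥0∞) : X → ℝ≥0∞ :=
  fun x => ∑ n, ‖g n x‖ₑ * u (f n x)

lemma measurable_modulusPop {X ι 𝕜 : Type*} [Fintype ι] [NormedRing 𝕜] [MeasurableSpace X]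
    [MeasurableSpace 𝕜] [OpensMeasurableSpace 𝕜] {f : ι → X → X} (hf : ∀ n, Measurable (f n))
    {g : ι → X → 𝕜} (hg : ∀ n, Measurable (g n)) {u : X → ℝ≥0∞} (hu : Measurable u) :
    Measurable (modulusPop f g u) :=
  Finset.measurable_sum _ fun n _ => (hg n).enorm.mul (hu.comp (hf n))

/- The truncation level `r` of `u` is sent to `c * r` because the coefficients sum to at most `c`;
together with the bound on `L¹` this is the interpolation argument for the couple `(L¹, L^∞)`. -/
lemma interpENorm_modulusPop_le {X ι 𝕜 : Type*} [Fintype ι] [NormedRing 𝕜] [MeasurableSpace X]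
    [MeasurableSpace 𝕜] [OpensMeasurableSpace 𝕜] {μ : Measure X} [SFinite μ] {ν : Measure ℝ≥0∞}
    {f : ι → X → X} (hf : ∀ n, Measurable (f n)) {g : ι → X → 𝕜} (hg : ∀ n, Measurable (g n))
    {c : ℝ≥0∞} (hsup : ∀ᵐ x ∂μ, ∑ n, ‖g n x‖ₑ ≤ c)
    (hint : ∀ u : X → ℝ≥0∞, Measurable u → ∫⁻ x, modulusPop f g u x ∂μ ≤ c * ∫⁻ x, u x ∂μ)
    {u : X → ℝ≥0∞} (hu : Measurable u) :
    interpENorm μ ν (modulusPop f g u) ≤ c * interpENorm μ ν u := by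
  refine interpENorm_le_mul hu (measurable_modulusPop hf hg hu) fun r => ?_
  refine (lintegral_mono_ae ?_).trans (hint (fun x => u x - r) (hu.sub_const r))
  filter_upwards [hsup] with x hx
  rw [tsub_le_iff_right]
  calc modulusPop f g u x ≤ ∑ n, ‖g n x‖ₑ * ((u (f n x) - r) + r) := by
        rw [modulusPop]
        gcongr
        exact le_tsub_add
    _ = modulusPop f g (fun x => u x - r) x + (∑ n, ‖g n x‖ₑ) * r := by
        simp_rw [modulusPop, mul_add, Finset.sum_add_distrib, Finset.sum_mul]
    _ ≤ modulusPop f g (fun x => u x - r) x + c * r := by gcongr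

end ModulusOperator

section Neumann

lemma exists_measurable_forall_hasSum {X 𝕜 : Type*} [MeasurableSpace X] [RCLike 𝕜]
    {a : ℕ → X → 𝕜} (ha : ∀ j, Measurable (a j)) :
    ∃ φ : X → 𝕜, Measurable φ ∧ ∀ x, ∑' j, ‖a j x‖ₑ ≠ ∞ → HasSum (fun j => a j x) (φ x) := by
  set A : Set X := {x | ∑' j, ‖a j x‖ₑ ≠ ∞}
  have hA : MeasurableSet A :=
    (Measurable.tsum fun j => (ha j).enorm) (measurableSet_singleton ∞).compl
  have hsum : ∀ x, HasSum (fun j => A.indicator (a j) x)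
      (A.indicator (fun x => ∑' j, a j x) x) := fun x => by
    by_cases hx : x ∈ A
    · simp only [indicator_of_mem hx]
      have hnorm : Summable fun j => ‖a j x‖ := by simpa using ENNReal.summable_toReal hx
      exact hnorm.of_norm.hasSum
    · simp only [indicator_of_notMem hx, hasSum_zero]
  refine ⟨A.indicator fun x => ∑' j, a j x, ?_, fun x hx => ?_⟩
  · exact measurable_of_tendsto_metrizable
      (fun M => Finset.measurable_sum (Finset.range M) fun j _ => (ha j).indicator hA)
      (tendsto_pi_nhds.2 fun x => by simpa using (hsum x).tendsto_sum_nat)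
  · have hxA : x ∈ A := hx
    simpa only [indicator_of_mem hxA] using hsum x

lemma enorm_sub_sum_range_le_tsum {E : Type*} [NormedAddCommGroup E] {a : ℕ → E}
    {s : E} (hs : HasSum a s) (M : ℕ) :
    ‖s - ∑ j ∈ Finset.range M, a j‖ₑ ≤ ∑' j, ‖a (j + M)‖ₑ := by
  rw [← ((hasSum_nat_add_iff' M).2 hs).tsum_eq]
  exact enorm_tsum_le_tsum_enorm

variable {k N : ℕ} {𝕜 : Type*} [RCLike 𝕜]
  {f : Fin N → EuclideanSpace ℝ (Fin k) → EuclideanSpace ℝ (Fin k)}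
  {g : Fin N → EuclideanSpace ℝ (Fin k) → 𝕜} {h : EuclideanSpace ℝ (Fin k) → 𝕜}

lemma enorm_Pop_le (f : Fin N → EuclideanSpace ℝ (Fin k) → EuclideanSpace ℝ (Fin k))
    (g : Fin N → EuclideanSpace ℝ (Fin k) → 𝕜) (φ : EuclideanSpace ℝ (Fin k) → 𝕜)
    (x : EuclideanSpace ℝ (Fin k)) : ‖Pop f g φ x‖ₑ ≤ modulusPop f g (fun y => ‖φ y‖ₑ) x :=
  (enorm_sum_le _ _).trans_eq (Finset.sum_congr rfl fun _ _ => enorm_mul _ _)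

lemma measurable_iterate_Pop (hf : ∀ n, Measurable (f n)) (hg : ∀ n, Measurable (g n))
    (hh : Measurable h) (j : ℕ) : Measurable ((Pop f g)^[j] h) := by
  induction j with
  | zero => exact hh
  | succ j ih =>
    rw [Function.iterate_succ_apply']
    exact Finset.measurable_sum _ fun n _ => (hg n).mul (ih.comp (hf n))

lemma hasSum_Pop_of_modulusPop_ne_top {a : ℕ → EuclideanSpace ℝ (Fin k) → 𝕜}
    {φ : EuclideanSpace ℝ (Fin k) → 𝕜}
    (hφ : ∀ x, ∑' j, ‖a j x‖ₑ ≠ ∞ → HasSum (fun j => a j x) (φ x))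
    {x : EuclideanSpace ℝ (Fin k)} (hx : modulusPop f g (fun y => ∑' j, ‖a j y‖ₑ) x ≠ ∞) :
    HasSum (fun j => Pop f g (a j) x) (Pop f g φ x) := by
  refine hasSum_sum fun n hn => ?_
  by_cases hgn : g n x = 0
  · simp only [hgn, zero_mul, hasSum_zero]
  · exact (hφ _ (ENNReal.lt_top_of_mul_ne_top_right (ENNReal.sum_ne_top.1 hx n hn)
      (enorm_ne_zero.2 hgn)).ne).mul_left _

variable {μ : Measure (EuclideanSpace ℝ (Fin k))} {ν : Measure ℝ≥0∞} {c : ℝ≥0∞}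

lemma interpENorm_iterate_Pop_le (hf : ∀ n, Measurable (f n)) (hg : ∀ n, Measurable (g n))
    (hP : ∀ u, Measurable u → interpENorm μ ν (modulusPop f g u) ≤ c * interpENorm μ ν u)
    (hh : Measurable h) (j : ℕ) :
    interpENorm μ ν (fun x => ‖(Pop f g)^[j] h x‖ₑ) ≤ c ^ j * interpENorm μ ν fun x => ‖h x‖ₑ := by
  induction j with
  | zero => simp
  | succ j ih =>
    rw [Function.iterate_succ_apply']
    calc interpENorm μ ν (fun x => ‖Pop f g ((Pop f g)^[j] h) x‖ₑ)
        ≤ interpENorm μ ν (modulusPop f g fun x => ‖(Pop f g)^[j] h x‖ₑ) :=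
          interpENorm_mono_ae (Eventually.of_forall (enorm_Pop_le f g _))
      _ ≤ c * interpENorm μ ν fun x => ‖(Pop f g)^[j] h x‖ₑ :=
          hP _ (measurable_iterate_Pop hf hg hh j).enorm
      _ ≤ c * (c ^ j * interpENorm μ ν fun x => ‖h x‖ₑ) := by gcongr
      _ = c ^ (j + 1) * interpENorm μ ν fun x => ‖h x‖ₑ := by ring

variable [SFinite μ]

lemma interpENorm_tsum_iterate_Pop_le (hf : ∀ n, Measurable (f n)) (hg : ∀ n, Measurable (g n))
    (hP : ∀ u, Measurable u → interpENorm μ ν (modulusPop f g u) ≤ c * interpENorm μ ν u)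
    (hh : Measurable h) (M : ℕ) :
    interpENorm μ ν (fun x => ∑' j, ‖(Pop f g)^[j + M] h x‖ₑ) ≤
      c ^ M * (1 - c)⁻¹ * interpENorm μ ν fun x => ‖h x‖ₑ :=
  calc interpENorm μ ν (fun x => ∑' j, ‖(Pop f g)^[j + M] h x‖ₑ)
      ≤ ∑' j, interpENorm μ ν (fun x => ‖(Pop f g)^[j + M] h x‖ₑ) :=
        interpENorm_tsum_le fun j => (measurable_iterate_Pop hf hg hh _).enorm
    _ ≤ ∑' j, c ^ (j + M) * interpENorm μ ν (fun x => ‖h x‖ₑ) :=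
        ENNReal.tsum_le_tsum fun j => interpENorm_iterate_Pop_le hf hg hP hh _
    _ = c ^ M * (1 - c)⁻¹ * interpENorm μ ν (fun x => ‖h x‖ₑ) := by
        simp_rw [pow_add]
        rw [ENNReal.tsum_mul_right, ENNReal.tsum_mul_right, ENNReal.tsum_geometric,
          mul_comm (1 - c)⁻¹]

theorem exists_measurable_neumann_solution (hf : ∀ n, Measurable (f n))
    (hg : ∀ n, Measurable (g n))
    (hP : ∀ u, Measurable u → interpENorm μ ν (modulusPop f g u) ≤ c * interpENorm μ ν u)
    (hc : c < 1) (hν : ∃ᵐ t ∂ν, t ≠ 0) (hh : Measurable h)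
    (hfin : interpENorm μ ν (fun x => ‖h x‖ₑ) < ∞) :
    ∃ φ : EuclideanSpace ℝ (Fin k) → 𝕜, Measurable φ ∧
      (∀ M, interpENorm μ ν (fun x => ‖φ x - ∑ j ∈ Finset.range M, (Pop f g)^[j] h x‖ₑ) ≤
        c ^ M * (1 - c)⁻¹ * interpENorm μ ν fun x => ‖h x‖ₑ) ∧
      ∀ᵐ x ∂μ, φ x = Pop f g φ x + h x := by
  have hmeas : ∀ j, Measurable ((Pop f g)^[j] h) := measurable_iterate_Pop hf hg hh
  obtain ⟨φ, hφ, hsum⟩ := exists_measurable_forall_hasSum hmeas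
  set U : EuclideanSpace ℝ (Fin k) → ℝ≥0∞ := fun x => ∑' j, ‖(Pop f g)^[j] h x‖ₑ
  have hU : Measurable U := Measurable.tsum fun j => (hmeas j).enorm
  have hUnorm : interpENorm μ ν U < ∞ :=
    (interpENorm_tsum_iterate_Pop_le hf hg hP hh 0).trans_lt (by
      rw [pow_zero, one_mul]
      exact ENNReal.mul_lt_top (ENNReal.inv_lt_top.2 (tsub_pos_of_lt hc)) hfin)
  have hUfin : ∀ᵐ x ∂μ, U x < ∞ := ae_lt_top_of_interpENorm_lt_top hν hU hUnorm
  have hPUfin : ∀ᵐ x ∂μ, modulusPop f g U x < ∞ :=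
    ae_lt_top_of_interpENorm_lt_top hν (measurable_modulusPop hf hg hU)
      ((hP U hU).trans_lt (ENNReal.mul_lt_top (hc.trans ENNReal.one_lt_top) hUnorm))
  refine ⟨φ, hφ, fun M => ?_, ?_⟩
  · refine (interpENorm_mono_ae ?_).trans (interpENorm_tsum_iterate_Pop_le hf hg hP hh M)
    filter_upwards [hUfin] with x hx
    exact enorm_sub_sum_range_le_tsum (hsum x hx.ne) M
  · filter_upwards [hUfin, hPUfin] with x hx hPx
    have hshift := hasSum_Pop_of_modulusPop_ne_top hsum hPx.ne
    simp_rw [← Function.iterate_succ_apply' (Pop f g)] at hshift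
    simpa using (hsum x hx.ne).unique
      ((hasSum_nat_add_iff (f := fun j => (Pop f g)^[j] h x) 1).1 hshift)

theorem ae_eq_of_ae_eq_Pop_add
    (hP : ∀ u, Measurable u → interpENorm μ ν (modulusPop f g u) ≤ c * interpENorm μ ν u)
    (hc : c < 1) (hν : ∃ᵐ t ∂ν, t ≠ 0) {φ φ' : EuclideanSpace ℝ (Fin k) → 𝕜} (hφ : Measurable φ)
    (hφ' : Measurable φ') (hφfin : interpENorm μ ν (fun x => ‖φ x‖ₑ) < ∞)
    (hφ'fin : interpENorm μ ν (fun x => ‖φ' x‖ₑ) < ∞)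
    (heq : ∀ᵐ x ∂μ, φ x = Pop f g φ x + h x) (heq' : ∀ᵐ x ∂μ, φ' x = Pop f g φ' x + h x) :
    φ =ᵐ[μ] φ' := by
  set w : EuclideanSpace ℝ (Fin k) → ℝ≥0∞ := fun x => ‖(φ - φ') x‖ₑ
  have hw : Measurable w := (hφ.sub hφ').enorm
  have hle : interpENorm μ ν w ≤ c * interpENorm μ ν w := by
    refine (interpENorm_mono_ae ?_).trans (hP w hw)
    filter_upwards [heq, heq'] with x hx hx'
    have hdiff : (φ - φ') x = Pop f g (φ - φ') x := by
      rw [Pi.sub_apply, hx, hx', add_sub_add_right_eq_sub]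
      simp only [Pop, Pi.sub_apply, mul_sub, Finset.sum_sub_distrib]
    exact (congrArg enorm hdiff).trans_le (enorm_Pop_le f g (φ - φ') x)
  have hfin : interpENorm μ ν w < ∞ :=
    ((interpENorm_mono_ae (Eventually.of_forall fun x => enorm_sub_le)).trans
      (interpENorm_add_le hφ.enorm hφ'.enorm)).trans_lt (ENNReal.add_lt_top.2 ⟨hφfin, hφ'fin⟩)
  have hzero : interpENorm μ ν w = 0 := by
    by_contra hne
    have hlt := ENNReal.mul_lt_mul_left hne hfin.ne hc
    rw [one_mul] at hlt
    exact hlt.not_ge hle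
  filter_upwards [ae_eq_zero_of_interpENorm_eq_zero hν hw hzero] with x hx
  exact sub_eq_zero.1 (enorm_eq_zero.1 hx)

end Neumann

section Contraction

lemma sum_enorm_le_ofReal {E : Type*} [SeminormedAddGroup E] {N : ℕ} {a : Fin N → E} {α : ℝ}
    (h : ∀ n, ‖a n‖ ≤ α * (1 / N)) : ∑ n, ‖a n‖ₑ ≤ ENNReal.ofReal α := by
  rcases N.eq_zero_or_pos with rfl | hN
  · simp
  calc ∑ n, ‖a n‖ₑ ≤ ∑ _ : Fin N, ENNReal.ofReal (α * (1 / N)) :=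
        Finset.sum_le_sum fun n _ => by
          rw [← ofReal_norm]
          exact ENNReal.ofReal_le_ofReal (h n)
    _ = ENNReal.ofReal α := by
        rw [Finset.sum_const, Finset.card_univ, Fintype.card_fin, nsmul_eq_mul,
          ← ENNReal.ofReal_natCast, ← ENNReal.ofReal_mul N.cast_nonneg]
        congr 1
        field_simp

lemma enorm_le_coe_div_mul_ofReal {E : Type*} [SeminormedAddGroup E] {a : E} {α j : ℝ}
    {κ : NNReal} (hα : 0 ≤ α) (h : ‖a‖ ≤ α * (|j| / κ)) :
    ‖a‖ₑ ≤ ((α.toNNReal / κ : NNReal) : ℝ≥0∞) * ENNReal.ofReal |j| := by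
  rw [← ofReal_norm, ← ENNReal.ofReal_coe_nnreal, ← ENNReal.ofReal_mul (NNReal.coe_nonneg _),
    NNReal.coe_div, Real.coe_toNNReal α hα, div_mul_eq_mul_div]
  exact ENNReal.ofReal_le_ofReal (h.trans_eq (mul_div_assoc _ _ _).symm)

lemma tendsto_ofReal_pow_div_mul_nhds_zero {α : ℝ} (hα0 : 0 ≤ α) (hα : α < 1) {C : ℝ≥0∞}
    (hC : C ≠ ∞) (b : ℝ) :
    Tendsto (fun M : ℕ => ENNReal.ofReal (α ^ M / b) * C) atTop (𝓝 0) := by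
  have hpow : Tendsto (fun M : ℕ => α ^ M / b) atTop (𝓝 0) := by
    simpa only [zero_div] using (tendsto_pow_atTop_nhds_zero_of_lt_one hα0 hα).div_const b
  simpa only [ENNReal.ofReal_zero, zero_mul] using
    ENNReal.Tendsto.mul_const (ENNReal.tendsto_ofReal hpow) (Or.inr hC)

variable {k N : ℕ} {𝕜 : Type*} [RCLike 𝕜] {Ω : Set (EuclideanSpace ℝ (Fin k))}
  {f : Fin N → EuclideanSpace ℝ (Fin k) → EuclideanSpace ℝ (Fin k)}
  {g : Fin N → EuclideanSpace ℝ (Fin k) → 𝕜}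

lemma interpENorm_modulusPop_le_ofReal_mul (hΩ : MeasurableSet Ω)
    (hmaps : ∀ n, MapsTo (f n) Ω Ω) (hf : ∀ n, Measurable (f n))
    (hfdiff : ∀ n, ∀ᵐ x ∂volume.restrict Ω, ∃ A, HasApproxDerivAt Ω (f n) A x) {K L : ℕ}
    (hK : ∀ n, volume {y | y ∈ Ω ∧ (K : ℕ∞) < (f n ⁻¹' {y} ∩ Ω).encard} = 0)
    (hL : ∀ s : Finset (Fin N), L < s.card → volume (⋂ n ∈ s, f n '' Ω) = 0)
    (hg : ∀ n, Measurable (g n)) {J : Fin N → EuclideanSpace ℝ (Fin k) → ℝ}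
    (hJ : ∀ n x, ∀ A, HasApproxDerivAt Ω (f n) A x → J n x = A.det) {α : ℝ} (hα : 0 ≤ α)
    (hbound : ∀ n, ∀ᵐ x ∂volume.restrict Ω,
      ‖g n x‖ ≤ α * min (|J n x| / ((K : ℝ) * (L : ℝ))) (1 / (N : ℝ)))
    {ν : Measure ℝ≥0∞} {u : EuclideanSpace ℝ (Fin k) → ℝ≥0∞} (hu : Measurable u) :
    interpENorm (volume.restrict Ω) ν (modulusPop f g u) ≤
      ENNReal.ofReal α * interpENorm (volume.restrict Ω) ν u := by
  set b : NNReal := α.toNNReal / (K * L)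
  have hb : (b * (K * L) : ℝ≥0∞) ≤ ENNReal.ofReal α := by
    have h : b * (K * L) ≤ α.toNNReal := by
      rcases eq_or_ne (K * L : NNReal) 0 with h0 | h0
      · simp [h0]
      · exact (div_mul_cancel₀ _ h0).le
    rw [ENNReal.ofReal]
    exact_mod_cast h
  have hdet : ∀ n, ∀ᵐ x ∂volume.restrict Ω, ∃ A, HasApproxDerivAt Ω (f n) A x ∧
      ‖g n x‖ₑ ≤ b * ENNReal.ofReal |A.det| := fun n => by
    filter_upwards [hfdiff n, hbound n] with x ⟨A, hA⟩ hx
    refine ⟨A, hA, enorm_le_coe_div_mul_ofReal hα ?_⟩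
    rw [← hJ n x A hA]
    push_cast
    exact hx.trans (by gcongr; exact min_le_left _ _)
  refine interpENorm_modulusPop_le hf hg ?_ (fun v hv => ?_) hu
  · filter_upwards [ae_all_iff.2 hbound] with x hx
    exact sum_enorm_le_ofReal fun n => (hx n).trans (by gcongr; exact min_le_right _ _)
  · have hmeas : ∀ n, Measurable fun x => ‖g n x‖ₑ * v (f n x) :=
      fun n => (hg n).enorm.mul (hv.comp (hf n))
    calc ∫⁻ x in Ω, modulusPop f g v x = ∑ n, ∫⁻ x in Ω, ‖g n x‖ₑ * v (f n x) :=
          lintegral_finsetSum _ fun n _ => hmeas n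
      _ ≤ b * (K * L) * ∫⁻ x in Ω, v x :=
          sum_lintegral_mul_comp_le_mul hΩ hmaps hf hK hL (fun n => (hg n).enorm) hdet hv
      _ ≤ ENNReal.ofReal α * ∫⁻ x in Ω, v x := by gcongr

end Contraction

theorem stmt17_general {k N : ℕ} {𝕜 : Type*} [RCLike 𝕜]
    (Ω : Set (EuclideanSpace ℝ (Fin k))) (hΩ : MeasurableSet Ω)
    (f : Fin N → EuclideanSpace ℝ (Fin k) → EuclideanSpace ℝ (Fin k))
    (hmaps : ∀ n, MapsTo (f n) Ω Ω)
    (g : Fin N → EuclideanSpace ℝ (Fin k) → 𝕜) (h0 : EuclideanSpace ℝ (Fin k) → 𝕜)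
    (hfmeas : ∀ n, Measurable (f n))
    (hfdiff : ∀ n, ∀ᵐ x ∂(volume.restrict Ω), ∃ L, HasApproxDerivAt Ω (f n) L x)
    (K : ℕ)
    (hK : ∀ n, volume {x | x ∈ Ω ∧ (K : ℕ∞) < (f n ⁻¹' {x} ∩ Ω).encard} = 0)
    (hgmeas : ∀ n, Measurable (g n))
    (L : ℕ)
    (hL : IsGreatest {l : ℕ | 1 ≤ l ∧ l ≤ N ∧ ∃ s : Finset (Fin N), s.card = l ∧
      0 < volume (⋂ n ∈ s, f n '' Ω)} L)
    (J : Fin N → EuclideanSpace ℝ (Fin k) → ℝ)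
    (hJ : ∀ n x, ∀ L', HasApproxDerivAt Ω (f n) L' x → J n x = L'.det)
    (σ : ℝ → ℝ) (hσ : IsMinMixture (extInv σ)) (hh0 : MemLorentz Ω σ h0)
    (α : ℝ) (hα0 : 0 ≤ α) (hα : α < 1)
    (hg : ∀ n, ∀ᵐ x ∂(volume.restrict Ω),
      ‖g n x‖ ≤ α * min (|J n x| / ((K : ℝ) * (L : ℝ))) (1 / (N : ℝ))) :
    ∃ φ : EuclideanSpace ℝ (Fin k) → 𝕜, MemLorentz Ω σ φ ∧
      Tendsto (fun M => lorentzNorm Ω σ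
          (fun x => (∑ n ∈ Finset.range M, (Pop f g)^[n] h0 x) - φ x))
        atTop (𝓝 0) ∧
      (∀ᵐ x ∂(volume.restrict Ω), φ x = Pop f g φ x + h0 x) ∧
      (∀ φ' : EuclideanSpace ℝ (Fin k) → 𝕜, MemLorentz Ω σ φ' →
        (∀ᵐ x ∂(volume.restrict Ω), φ' x = Pop f g φ' x + h0 x) →
        φ' =ᵐ[volume.restrict Ω] φ) ∧
      ∀ M, lorentzNorm Ω σ (fun x => φ x - ∑ n ∈ Finset.range M, (Pop f g)^[n] h0 x) ≤
        ENNReal.ofReal (α ^ M / (1 - α)) * lorentzNorm Ω σ h0 := by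
  obtain ⟨ν, _, hν⟩ := hσ
  have hν0 : ∃ᵐ t ∂ν, t ≠ 0 := frequently_ne_zero_of_extInv_eq hν
  have hnorm : ∀ φ : EuclideanSpace ℝ (Fin k) → 𝕜,
      lorentzNorm Ω σ φ = interpENorm (volume.restrict Ω) ν fun x => ‖φ x‖ₑ :=
    lorentzNorm_eq_interpENorm hΩ hν
  have hL' : ∀ s : Finset (Fin N), L < s.card → volume (⋂ n ∈ s, f n '' Ω) = 0 := fun s hs => by
    by_contra hpos
    exact hs.not_ge (hL.2 ⟨by omega, card_finset_fin_le s, s, rfl, pos_iff_ne_zero.2 hpos⟩)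
  have hP : ∀ u, Measurable u → interpENorm (volume.restrict Ω) ν (modulusPop f g u) ≤
      ENNReal.ofReal α * interpENorm (volume.restrict Ω) ν u := fun u =>
    interpENorm_modulusPop_le_ofReal_mul hΩ hmaps hfmeas hfdiff hK hL' hgmeas hJ hα0 hg
  have hc : ENNReal.ofReal α < 1 := ENNReal.ofReal_lt_one.2 hα
  obtain ⟨φ, hφ, htail, hsol⟩ := exists_measurable_neumann_solution hfmeas hgmeas hP hc hν0 hh0.1
    (hnorm h0 ▸ hh0.2.2)
  have hbound : ∀ M, lorentzNorm Ω σ (fun x => φ x - ∑ n ∈ Finset.range M, (Pop f g)^[n] h0 x) ≤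
      ENNReal.ofReal (α ^ M / (1 - α)) * lorentzNorm Ω σ h0 := fun M => by
    rw [hnorm, hnorm, ENNReal.ofReal_div_of_pos (by linarith), ENNReal.ofReal_pow hα0,
      ENNReal.ofReal_sub _ hα0, ENNReal.ofReal_one, div_eq_mul_inv]
    exact htail M
  have hφfin : lorentzNorm Ω σ φ < ∞ := by
    have h := (hbound 0).trans_lt (ENNReal.mul_lt_top ENNReal.ofReal_lt_top hh0.2.2)
    simpa using h
  refine ⟨φ, ⟨hφ, locallyIntegrableOn_of_interpENorm_lt_top hν0 hφ.stronglyMeasurable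
    (hnorm φ ▸ hφfin), hφfin⟩, ?_, hsol, fun φ' hφ' hsol' => ?_, hbound⟩
  · refine tendsto_of_tendsto_of_tendsto_of_le_of_le tendsto_const_nhds
      (tendsto_ofReal_pow_div_mul_nhds_zero hα0 hα hh0.2.2.ne (1 - α)) (fun _ => zero_le)
      fun M => (hbound M).trans_eq' ?_
    simp_rw [hnorm, enorm_sub_rev _ (φ _)]
  · exact ae_eq_of_ae_eq_Pop_add hP hc hν0 hφ'.1 hφ (hnorm φ' ▸ hφ'.2.2) (hnorm φ ▸ hφfin) hsol'
      hsol

/-- Under hypothesis (H), for an integer `m > 1` and the Young function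
`ψ_m(t) = m t^m`, if `h0 ∈ L^{ψ_m,1}(Ω,𝕜)` and
`|g_n(x)| ≤ α · min{|J_{f_n}(x)|/(K·L), 1/N}` a.e. for some `α ∈ [0, 1/2)`, then the
series `∑ Pⁿ h0` converges in `L^{ψ_m,1}(Ω,𝕜)` to the unique solution `φ` of
`φ = P φ + h0` in `L^{ψ_m,1}(Ω,𝕜)`, and
`‖∑_{n=m}^∞ Pⁿ h0‖ ≤ (2α)^m (1-2α)⁻¹ ‖h0‖`. -/
theorem stmt17 {k N : ℕ} {𝕜 : Type*} [RCLike 𝕜]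
    (Ω : Set (EuclideanSpace ℝ (Fin k))) (hΩ : IsOpen Ω)
    (f : Fin N → EuclideanSpace ℝ (Fin k) → EuclideanSpace ℝ (Fin k))
    (hmaps : ∀ n, Set.MapsTo (f n) Ω Ω)
    (g : Fin N → EuclideanSpace ℝ (Fin k) → 𝕜) (h0 : EuclideanSpace ℝ (Fin k) → 𝕜)
    -- hypothesis (H):
    (hfmeas : ∀ n, Measurable (f n))
    (hfdiff : ∀ n, ∀ᵐ x ∂(volume.restrict Ω), ∃ L, HasApproxDerivAt Ω (f n) L x)
    (hLuzinN : ∀ n, ∀ S ⊆ Ω, volume S = 0 → volume (f n '' S) = 0)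
    (hpreim : ∀ n, ∀ M : Set (EuclideanSpace ℝ (Fin k)),
      volume M = 0 → volume (f n ⁻¹' M) = 0)
    (K : ℕ)
    (hK : ∀ n, volume {x | x ∈ Ω ∧ (K : ℕ∞) < (f n ⁻¹' {x} ∩ Ω).encard} = 0)
    (hgmeas : ∀ n, Measurable (g n)) (hh0meas : Measurable h0)
    (L : ℕ)
    (hL : IsGreatest {l : ℕ | 1 ≤ l ∧ l ≤ N ∧ ∃ s : Finset (Fin N), s.card = l ∧
      0 < volume (⋂ n ∈ s, f n '' Ω)} L)
    -- the (approximate) Jacobians of the maps `f n`: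
    (J : Fin N → EuclideanSpace ℝ (Fin k) → ℝ)
    (hJ : ∀ n x, ∀ L', HasApproxDerivAt Ω (f n) L' x → J n x = L'.det)
    (hJ0 : ∀ n x, ¬ (∃ L', HasApproxDerivAt Ω (f n) L' x) → J n x = 0)
    -- the Young function `ψ_m t = m * t ^ m` for an integer `m > 1`, with `τ` and
    -- `σ = τ⁻¹`:
    (m : ℕ) (hm : 1 < m)
    (ψ : ℝ → ℝ) (hψ : ∀ t : ℝ, ψ t = m * t ^ m)
    (τ : ℝ → ℝ) (hτ0 : τ 0 = 0) (hτ : ∀ t : ℝ, 0 < t → τ t = 1 / ψ (1 / t))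
    (σ : ℝ → ℝ) (hσ_nonneg : ∀ t : ℝ, 0 ≤ t → 0 ≤ σ t)
    (hσ_left : ∀ t : ℝ, 0 ≤ t → σ (τ t) = t)
    (hσ_right : ∀ t : ℝ, 0 ≤ t → τ (σ t) = t)
    -- `h0 ∈ L^{ψ,1}(Ω,𝕜)`:
    (hh0 : MemLorentz Ω σ h0)
    -- the contraction-type bound on the coefficients:
    (α : ℝ) (hα0 : 0 ≤ α) (hα : α < 1 / 2)
    (hg : ∀ n, ∀ᵐ x ∂(volume.restrict Ω),
      ‖g n x‖ ≤ α * min (|J n x| / ((K : ℝ) * (L : ℝ))) (1 / (N : ℝ))) :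
    ∃ φ : EuclideanSpace ℝ (Fin k) → 𝕜, MemLorentz Ω σ φ ∧
      -- the series `∑_{n=0}^∞ Pⁿ h0` converges in `L^{ψ,1}(Ω,𝕜)` to `φ`
      Tendsto (fun M => lorentzNorm Ω σ
          (fun x => (∑ n ∈ Finset.range M, (Pop f g)^[n] h0 x) - φ x))
        atTop (𝓝 0) ∧
      -- `φ` solves `φ = P φ + h0`
      (∀ᵐ x ∂(volume.restrict Ω), φ x = (∑ n : Fin N, g n x * φ (f n x)) + h0 x) ∧
      -- `φ` is the unique solution in `L^{ψ,1}(Ω,𝕜)`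
      (∀ φ' : EuclideanSpace ℝ (Fin k) → 𝕜, MemLorentz Ω σ φ' →
        (∀ᵐ x ∂(volume.restrict Ω), φ' x = (∑ n : Fin N, g n x * φ' (f n x)) + h0 x) →
        φ' =ᵐ[volume.restrict Ω] φ) ∧
      -- the norm estimate for the tail `∑_{n=m}^∞ Pⁿ h0 = φ - ∑_{n<m} Pⁿ h0`
      lorentzNorm Ω σ
          (fun x => φ x - ∑ n ∈ Finset.range m, (Pop f g)^[n] h0 x) ≤
        ENNReal.ofReal ((2 * α) ^ m / (1 - 2 * α)) * lorentzNorm Ω σ h0 := by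
  obtain ⟨φ, hφ, hlim, hsol, huniq, htail⟩ := stmt17_general Ω hΩ.measurableSet f hmaps g h0 hfmeas
    hfdiff K hK hgmeas L hL J hJ σ (isMinMixture_extInv_of_leftInverse hm hψ hτ0 hτ hσ_left) hh0 α
    hα0 (by linarith) hg
  exact ⟨φ, hφ, hlim, hsol, huniq, (htail m).trans (by gcongr <;> linarith)⟩
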